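/- Let X be a K-convex complex Banach space and p ∈ (1,∞). Then there exist α ∈ [1,2) and C ∈ (0,∞) such that for every n,d ∈ ℕ with 1 ≤ d ≤ n, every function f : {-1,1}^n → X of degree at most d satisfies (2^{-n} Σ_{δ ∈ {-1,1}^n} ‖Σ_{i=1}^n δ_i ∂_i f‖_{L_p({-1,1}^n;X)}^p)^{1/p} ≤ C d^α (log d + 1) ‖f‖_{L_p({-1,1}^n;X)}. -/

import Mathlib

open scoped BigOperators ENNReal NNReal

noncomputable section

namespace HammingCube

variable {X : Type*} [NormedAddCommGroup X] [NormedSpace ℂ X]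

/-- The sign ±1 associated to a boolean coordinate. -/
def sgn (b : Bool) : ℝ := if b then 1 else -1

/-- The Walsh function `w_A(ε) = ∏_{i ∈ A} ε_i`. -/
def walsh {n : ℕ} (A : Finset (Fin n)) (ε : Fin n → Bool) : ℝ := ∏ i ∈ A, sgn (ε i)

/-- The Fourier–Walsh coefficient `f̂(A) = 2⁻ⁿ ∑_δ f(δ) w_A(δ)`. -/
def coeff {n : ℕ} (f : (Fin n → Bool) → X) (A : Finset (Fin n)) : X :=
  (2 ^ n : ℝ)⁻¹ • ∑ δ : Fin n → Bool, walsh A δ • f δ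

/-- `f` has degree at most `d`: `f̂(A) = 0` whenever `|A| > d`. -/
def degLE {n : ℕ} (f : (Fin n → Bool) → X) (d : ℕ) : Prop :=
  ∀ A : Finset (Fin n), d < A.card → coeff f A = 0

/-- `f` belongs to the `d`-th tail space: `f̂(A) = 0` whenever `|A| < d`. -/
def tailSpace {n : ℕ} (f : (Fin n → Bool) → X) (d : ℕ) : Prop :=
  ∀ A : Finset (Fin n), A.card < d → coeff f A = 0

/-- The heat semigroup `e^{-tΔ} f = ∑_A e^{-t|A|} f̂(A) w_A`. -/
def heat {n : ℕ} (t : ℝ) (f : (Fin n → Bool) → X) : (Fin n → Bool) → X :=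
  fun ε => ∑ A : Finset (Fin n), Real.exp (-t * A.card) • walsh A ε • coeff f A

/-- The hypercube Laplacian `Δ f = ∑_A |A| f̂(A) w_A`. -/
def lap {n : ℕ} (f : (Fin n → Bool) → X) : (Fin n → Bool) → X :=
  fun ε => ∑ A : Finset (Fin n), (A.card : ℝ) • walsh A ε • coeff f A

/-- The fractional Laplacian `Δ^γ f = ∑_A |A|^γ f̂(A) w_A`. -/
def fracLap {n : ℕ} (γ : ℝ) (f : (Fin n → Bool) → X) : (Fin n → Bool) → X :=
  fun ε => ∑ A : Finset (Fin n), ((A.card : ℝ) ^ γ) • walsh A ε • coeff f A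

/-- The `i`-th discrete partial derivative. -/
def pderiv {n : ℕ} (i : Fin n) (f : (Fin n → Bool) → X) : (Fin n → Bool) → X :=
  fun ε => (2 : ℝ)⁻¹ • (f ε - f (Function.update ε i (!(ε i))))

/-- The vector-valued `L_p` norm `(2⁻ⁿ ∑_ε ‖f(ε)‖^p)^{1/p}` for finite `p`. -/
def lpNorm {n : ℕ} {Y : Type*} [NormedAddCommGroup Y] (p : ℝ)
    (f : (Fin n → Bool) → Y) : ℝ :=
  ((2 ^ n : ℝ)⁻¹ * ∑ ε : Fin n → Bool, ‖f ε‖ ^ p) ^ (1 / p)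

/-- The `L_∞` norm `max_ε ‖f(ε)‖`. -/
def linfNorm {n : ℕ} {Y : Type*} [NormedAddCommGroup Y]
    (f : (Fin n → Bool) → Y) : ℝ :=
  ⨆ ε : Fin n → Bool, ‖f ε‖

/-- The `L_p` norm for `p ∈ [1,∞]` encoded as `p : ℝ≥0∞`. -/
def lpNormE {n : ℕ} {Y : Type*} [NormedAddCommGroup Y] (p : ℝ≥0∞)
    (f : (Fin n → Bool) → Y) : ℝ :=
  if p = ⊤ then linfNorm f else lpNorm p.toReal f

/-- The scalar `L_p` norm of the gradient `‖(∑_i |∂_i f|²)^{1/2}‖_{L_p}`. -/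
def gradLpNorm {n : ℕ} (p : ℝ) (f : (Fin n → Bool) → ℂ) : ℝ :=
  lpNorm p (fun ε => Real.sqrt (∑ i : Fin n, ‖pderiv i f ε‖ ^ 2))

/-- The Rademacher projection `Rad f(ε) = ∑_i f̂({i}) ε_i`. -/
def Rad {n : ℕ} (f : (Fin n → Bool) → X) : (Fin n → Bool) → X :=
  fun ε => ∑ i : Fin n, sgn (ε i) • coeff f {i}

/-- A complex Banach space is `K`-convex if the Rademacher projections are uniformly
bounded on `L_q` for some `q ∈ (1,∞)`. -/
def KConvex (X : Type*) [NormedAddCommGroup X] [NormedSpace ℂ X] : Prop :=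
  ∃ q : ℝ, 1 < q ∧ ∃ M : ℝ, ∀ (n : ℕ) (f : (Fin n → Bool) → X),
    lpNorm q (Rad f) ≤ M * lpNorm q f

/-- `X` has cotype `q` with constant `C`. -/
def HasCotype (X : Type*) [NormedAddCommGroup X] [NormedSpace ℂ X] (q C : ℝ) : Prop :=
  ∀ (n : ℕ) (x : Fin n → X),
    C⁻¹ * (∑ i : Fin n, ‖x i‖ ^ q) ^ (1 / q) ≤
      ((2 ^ n : ℝ)⁻¹ * ∑ ε : Fin n → Bool, ‖∑ i : Fin n, sgn (ε i) • x i‖ ^ q) ^ (1 / q)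

/-- The entropy `Ent(h)` of a nonnegative function on the cube. -/
def entropy {n : ℕ} (h : (Fin n → Bool) → ℝ) : ℝ :=
  (2 ^ n : ℝ)⁻¹ * ∑ ε : Fin n → Bool, h ε * Real.log (h ε) -
    ((2 ^ n : ℝ)⁻¹ * ∑ ε : Fin n → Bool, h ε) *
      Real.log ((2 ^ n : ℝ)⁻¹ * ∑ ε : Fin n → Bool, h ε)

/-- The `L_∞` norm of the gradient `max_ε (∑_i |∂_i f(ε)|²)^{1/2}`. -/
def gradLinfNorm {n : ℕ} (f : (Fin n → Bool) → ℂ) : ℝ :=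
  ⨆ ε : Fin n → Bool, Real.sqrt (∑ i : Fin n, ‖pderiv i f ε‖ ^ 2)

/-! `K`-convexity bounds the projection onto the homogeneous part of degree one, and averaging over
random subsets of the coordinates turns this into bounds for all homogeneous parts. Hence the noise
operators `w_A ↦ ρ ^ |A| w_A` are uniformly bounded on `L_q` for small complex `ρ`. Stein
interpolation with the contractions given by real `ρ ∈ [-1, 1]` carries the bound over to `L_p` for
small imaginary `ρ`, and tensorisation over random subsets extends it to a rhombus with vertices
`±1` and `±i r`. On functions of degree at most `d`, a Phragmén–Lindelöf argument in the complement
of the rhombus, whose exterior angle at `1` is less than `2π`, bounds the noise operator at a real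
`z > 1` with `z - 1` of order `d ^ (-α)` and `α < 2`. Finally, choose a random `B` by keeping each
index with probability `1 - z⁻¹`. Averaging over `B` the projection onto `|A ∩ B| = 1` of the noisy
function, evaluated at the point which agrees with `δ` on `B` and with `ε` elsewhere, gives
`(z - 1) ∑ i, δ i ε i ∂_i f(ε)`, and replacing `δ` by `δ ε` does not change the norm.
-/

section EllNorm

variable {ι κ E : Type*} [Fintype ι] [Fintype κ] [NormedAddCommGroup E] {p K : ℝ}

/-- The norm of `ℓ_p(ι; E)`. Unlike `lpNorm` it is not normalised and lives on any finite index
type, in particular on pairs of points of the cube. -/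
def ellNorm (p : ℝ) (f : ι → E) : ℝ := (∑ i, ‖f i‖ ^ p) ^ (1 / p)

lemma ellNorm_eq_norm_toLp (hp : 0 < p) (f : ι → E) :
    ellNorm p f = ‖WithLp.toLp (ENNReal.ofReal p) f‖ := by
  rw [PiLp.norm_eq_sum (by rwa [ENNReal.toReal_ofReal hp.le]), ENNReal.toReal_ofReal hp.le]
  rfl

lemma ellNorm_nonneg (f : ι → E) : 0 ≤ ellNorm p f := by
  unfold ellNorm; positivity

lemma ellNorm_rpow (hp : 0 < p) (f : ι → E) : ellNorm p f ^ p = ∑ i, ‖f i‖ ^ p := by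
  rw [ellNorm, ← Real.rpow_mul (by positivity), one_div_mul_cancel hp.ne', Real.rpow_one]

lemma norm_le_ellNorm (hp : 0 < p) (f : ι → E) (i : ι) : ‖f i‖ ≤ ellNorm p f := by
  rw [← Real.rpow_le_rpow_iff (norm_nonneg _) (ellNorm_nonneg f) hp, ellNorm_rpow hp]
  exact Finset.single_le_sum (f := fun j ↦ ‖f j‖ ^ p) (fun j _ ↦ by positivity) (Finset.mem_univ i)

lemma ellNorm_smul [NormedSpace ℂ E] (hp : 1 ≤ p) (c : ℂ) (f : ι → E) :
    ellNorm p (c • f) = ‖c‖ * ellNorm p f := by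
  have : Fact (1 ≤ ENNReal.ofReal p) := ⟨ENNReal.one_le_ofReal.2 hp⟩
  simp only [ellNorm_eq_norm_toLp (zero_lt_one.trans_le hp), WithLp.toLp_smul, norm_smul]

lemma ellNorm_sum_le {σ : Type*} (hp : 1 ≤ p) (s : Finset σ) (f : σ → ι → E) :
    ellNorm p (∑ k ∈ s, f k) ≤ ∑ k ∈ s, ellNorm p (f k) := by
  have : Fact (1 ≤ ENNReal.ofReal p) := ⟨ENNReal.one_le_ofReal.2 hp⟩
  simp only [ellNorm_eq_norm_toLp (zero_lt_one.trans_le hp), WithLp.toLp_sum]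
  exact norm_sum_le _ _

lemma ellNorm_comp_equiv (e : κ ≃ ι) (f : ι → E) : ellNorm p (f ∘ e) = ellNorm p f := by
  simp only [ellNorm, Function.comp_apply, e.sum_comp fun i ↦ ‖f i‖ ^ p]

lemma ellNorm_comp_fst (f : ι → E) :
    ellNorm p (fun x : ι × κ ↦ f x.1) = (Fintype.card κ : ℝ) ^ (1 / p) * ellNorm p f := by
  simp only [ellNorm, Fintype.sum_prod_type, Finset.sum_const, Finset.card_univ, nsmul_eq_mul,
    ← Finset.mul_sum]
  exact Real.mul_rpow (by positivity) (by positivity)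

lemma ellNorm_uncurry_le {F G : κ → ι → E} (hp : 0 < p) (hK : 0 ≤ K)
    (h : ∀ k, ellNorm p (F k) ≤ K * ellNorm p (G k)) :
    ellNorm p (Function.uncurry F) ≤ K * ellNorm p (Function.uncurry G) := by
  rw [← Real.rpow_le_rpow_iff (ellNorm_nonneg _) (mul_nonneg hK (ellNorm_nonneg _)) hp,
    Real.mul_rpow hK (ellNorm_nonneg _), ellNorm_rpow hp, ellNorm_rpow hp,
    Fintype.sum_prod_type, Fintype.sum_prod_type, Finset.mul_sum]
  refine Finset.sum_le_sum fun k _ ↦ ?_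
  have := Real.rpow_le_rpow (ellNorm_nonneg _) (h k) hp.le
  rwa [Real.mul_rpow hK (ellNorm_nonneg _), ellNorm_rpow hp, ellNorm_rpow hp] at this

end EllNorm

section ReciprocalExponent

open Complex.HadamardThreeLines

variable {ι E : Type*} [Fintype ι] [NormedAddCommGroup E] [NormedSpace ℂ E] {p p₀ p₁ : ℝ}

lemma norm_sum_mul_apply_le {q : ℝ} (hpq : p.HolderConjugate q) (γ : ι → ℂ)
    {g : ι → StrongDual ℂ E} (hg : ∀ i, ‖g i‖ ≤ 1) (u : ι → E) :
    ‖∑ i, γ i * g i (u i)‖ ≤ ellNorm p γ * ellNorm q u := by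
  calc ‖∑ i, γ i * g i (u i)‖ ≤ ∑ i, ‖γ i‖ * ‖u i‖ := by
        refine norm_sum_le_of_le _ fun i _ ↦ ?_
        rw [norm_mul]
        gcongr
        simpa using (g i).le_of_opNorm_le (hg i) (u i)
    _ ≤ ellNorm p γ * ellNorm q u := by
        simpa only [abs_norm, ellNorm] using
          Real.inner_le_Lp_mul_Lq Finset.univ (fun i ↦ ‖γ i‖) (fun i ↦ ‖u i‖) hpq

lemma ellNorm_le_of_forall_pairing_le {K : ℝ} (hp : 0 < p) (hK : 0 ≤ K) (h : ι → E)
    (hle : ∀ (H : ι → ℝ) (g : ι → StrongDual ℂ E), (∀ i, 0 ≤ H i) → ∑ i, H i ^ p = 1 →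
      (∀ i, ‖g i‖ ≤ 1) → ‖∑ i, ((H i ^ (p - 1) : ℝ) : ℂ) * g i (h i)‖ ≤ K) :
    ellNorm p h ≤ K := by
  rcases (ellNorm_nonneg (p := p) h).eq_or_lt with h0 | hpos
  · exact h0 ▸ hK
  choose g hg hgh using fun i ↦ exists_dual_vector'' ℂ (h i)
  set N := ellNorm p h
  have hsum : ∑ i, (‖h i‖ / N) ^ p = 1 := by
    simp only [Real.div_rpow (norm_nonneg _) hpos.le, ← Finset.sum_div]
    rw [← ellNorm_rpow hp, div_self (by positivity)]
  have hpair : ∑ i, (((‖h i‖ / N) ^ (p - 1) : ℝ) : ℂ) * g i (h i) = N := by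
    have hterm (i : ι) : (‖h i‖ / N) ^ (p - 1) * ‖h i‖ = (‖h i‖ / N) ^ p * N := by
      have hsucc : (‖h i‖ / N) ^ p = (‖h i‖ / N) ^ (p - 1) * (‖h i‖ / N) := by
        rw [← Real.rpow_add_one' (by positivity) (by simpa using hp.ne'), sub_add_cancel]
      rw [hsucc, mul_assoc, div_mul_cancel₀ _ hpos.ne']
    simp only [hgh, Complex.coe_algebraMap, ← Complex.ofReal_mul, ← Complex.ofReal_sum, hterm,
      ← Finset.sum_mul, hsum, one_mul]
  have := hle _ g (fun i ↦ by positivity) hsum hg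
  rwa [hpair, Complex.norm_real, Real.norm_of_nonneg hpos.le] at this

lemma ellNorm_cpow_smul_le_one {a : ι → ℝ} (hp : 0 < p) (ha : ∀ i, 0 ≤ a i)
    (hsum : ∑ i, a i ^ p = 1) {u : ι → E} (hu : ∀ i, ‖u i‖ ≤ 1) {w : ℂ} (hw : 0 < w.re) :
    ellNorm w.re⁻¹ (fun i ↦ (a i : ℂ) ^ (p * w) • u i) ≤ 1 := by
  refine Real.rpow_le_one (by positivity) ?_ (by positivity)
  rw [← hsum]
  refine Finset.sum_le_sum fun i _ ↦ ?_
  have hre : (p * w).re = p * w.re := Complex.re_ofReal_mul ..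
  rw [norm_smul, Complex.norm_cpow_eq_rpow_re_of_nonneg (ha i) (by rw [hre]; positivity), hre]
  calc (a i ^ (p * w.re) * ‖u i‖) ^ w.re⁻¹ ≤ (a i ^ (p * w.re) * 1) ^ w.re⁻¹ := by
        have := ha i
        gcongr
        exact hu i
    _ = a i ^ p := by rw [mul_one, ← Real.rpow_mul (ha i), mul_inv_cancel_right₀ hw.ne']

/-- The point `(1 - z) / p₀ + z / p₁` of the complex segment of reciprocal exponents. -/
def reciprocalExponent (p₀ p₁ : ℝ) (z : ℂ) : ℂ := (1 - z) * (p₀⁻¹ : ℝ) + z * (p₁⁻¹ : ℝ)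

lemma reciprocalExponent_re (p₀ p₁ : ℝ) (z : ℂ) :
    (reciprocalExponent p₀ p₁ z).re = (1 - z.re) * p₀⁻¹ + z.re * p₁⁻¹ := by
  simp [reciprocalExponent]

lemma reciprocalExponent_re_mem_Ioo (hp₀ : 1 < p₀) (hp₁ : 1 < p₁) {z : ℂ}
    (hz : z ∈ verticalClosedStrip 0 1) : (reciprocalExponent p₀ p₁ z).re ∈ Set.Ioo 0 1 := by
  have hinv {q : ℝ} (hq : 1 < q) : q⁻¹ ∈ Set.Ioo (0 : ℝ) 1 :=
    ⟨by positivity, inv_lt_one_of_one_lt₀ hq⟩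
  rw [reciprocalExponent_re]
  exact convex_Ioo (0 : ℝ) 1 (hinv hp₀) (hinv hp₁) (sub_nonneg.2 hz.2) hz.1 (sub_add_cancel _ _)

lemma le_one_of_sum_rpow_eq_one {a : ι → ℝ} (hp : 0 < p) (ha : ∀ i, 0 ≤ a i)
    (hsum : ∑ i, a i ^ p = 1) (i : ι) : a i ≤ 1 := by
  simpa [ellNorm, abs_of_nonneg (ha _), hsum] using norm_le_ellNorm hp a i

lemma exists_eq_ellNorm_smul {f : ι → E} (hp : 0 < p) (hf : 0 < ellNorm p f) :
    ∃ (a : ι → ℝ) (u : ι → E), (∀ i, 0 ≤ a i) ∧ ∑ i, a i ^ p = 1 ∧ (∀ i, ‖u i‖ ≤ 1) ∧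
      f = (ellNorm p f : ℂ) • fun i ↦ (a i : ℂ) • u i := by
  refine ⟨fun i ↦ ‖f i‖ / ellNorm p f, fun i ↦ (‖f i‖⁻¹ : ℂ) • f i, fun i ↦ by positivity, ?_,
    fun i ↦ by simpa [norm_smul] using inv_mul_le_one, funext fun i ↦ ?_⟩
  · simp only [Real.div_rpow (norm_nonneg _) hf.le, ← Finset.sum_div, ← ellNorm_rpow hp]
    exact div_self (by positivity)
  · rcases eq_or_ne (f i) 0 with hi | hi
    · simp [hi]
    · have hfi : (‖f i‖ : ℂ) ≠ 0 := mod_cast norm_ne_zero_iff.2 hi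
      have hN : (ellNorm p f : ℂ) ≠ 0 := mod_cast hf.ne'
      have hcancel : (ellNorm p f : ℂ) * (‖f i‖ / ellNorm p f * (‖f i‖ : ℂ)⁻¹) = 1 := by field_simp
      simp [smul_smul, hcancel]

lemma differentiableAt_cpow_mul {a c : ℝ} {w : ℂ → ℂ} {z : ℂ} (hc : 0 < c)
    (hw : DifferentiableAt ℂ w z) (hz : 0 < (w z).re) :
    DifferentiableAt ℂ (fun z ↦ (a : ℂ) ^ (c * w z)) z := by
  refine (hw.const_mul _).const_cpow (.inr (mul_ne_zero (mod_cast hc.ne') ?_))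
  exact fun h ↦ by simp [h] at hz

lemma norm_cpow_mul_le_one {a c : ℝ} {w : ℂ} (ha : 0 ≤ a) (ha' : a ≤ 1) (hc : 0 < c)
    (hw : 0 < w.re) : ‖(a : ℂ) ^ (c * w)‖ ≤ 1 := by
  have hre : (c * w).re = c * w.re := Complex.re_ofReal_mul ..
  rw [Complex.norm_cpow_eq_rpow_re_of_nonneg ha (by rw [hre]; positivity), hre]
  exact Real.rpow_le_one ha ha' (by positivity)

end ReciprocalExponent

section SteinInterpolation

open Complex.HadamardThreeLines

variable {ι κ E F : Type*} [Fintype κ] [NormedAddCommGroup E] [NormedSpace ℂ E]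
  [NormedAddCommGroup F] [NormedSpace ℂ F] {p p₀ p₁ θ : ℝ}

/-- The analytic family of pairings behind Stein interpolation: with `y` the reciprocal exponent
at `z`, the vector with entries `a j ^ (p y) • u j` is transformed by `T z` and tested against
the functional with entries `H i ^ (p (1 - y)) • g i`. -/
def steinPairing (p p₀ p₁ : ℝ) (T : ℂ → (ι → E) →ₗ[ℂ] (κ → F)) (a : ι → ℝ) (u : ι → E)
    (H : κ → ℝ) (g : κ → StrongDual ℂ F) (z : ℂ) : ℂ :=
  ∑ i, (H i : ℂ) ^ (p * (1 - reciprocalExponent p₀ p₁ z)) *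
    g i (T z (fun j ↦ (a j : ℂ) ^ (p * reciprocalExponent p₀ p₁ z) • u j) i)

section SteinPairing

variable {T : ℂ → (ι → E) →ₗ[ℂ] (κ → F)} {a : ι → ℝ} {u : ι → E} {H : κ → ℝ}
  {g : κ → StrongDual ℂ F}

lemma steinPairing_eq_sum_single [Fintype ι] [DecidableEq ι] (z : ℂ) :
    steinPairing p p₀ p₁ T a u H g z =
      ∑ i, (H i : ℂ) ^ (p * (1 - reciprocalExponent p₀ p₁ z)) *
        ∑ j, (a j : ℂ) ^ (p * reciprocalExponent p₀ p₁ z) * g i (T z (Pi.single j (u j)) i) := by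
  refine Finset.sum_congr rfl fun i _ ↦ ?_
  rw [← Finset.univ_sum_single fun j ↦ (a j : ℂ) ^ (p * reciprocalExponent p₀ p₁ z) • u j]
  simp only [Pi.single_smul', map_sum, map_smul, Finset.sum_apply, Pi.smul_apply, smul_eq_mul]

lemma differentiableAt_steinPairing [Finite ι] (hp : 0 < p) (hp₀ : 1 < p₀) (hp₁ : 1 < p₁)
    (hT : ∀ f i, Differentiable ℂ fun z ↦ T z f i) {z : ℂ} (hz : z ∈ verticalClosedStrip 0 1) :
    DifferentiableAt ℂ (steinPairing p p₀ p₁ T a u H g) z := by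
  classical
  cases nonempty_fintype ι
  obtain ⟨hy, hy'⟩ := reciprocalExponent_re_mem_Ioo hp₀ hp₁ hz
  have hdiff : DifferentiableAt ℂ (reciprocalExponent p₀ p₁) z := by
    unfold reciprocalExponent; fun_prop
  rw [funext steinPairing_eq_sum_single]
  refine .fun_sum fun i _ ↦ .mul ?_ (.fun_sum fun j _ ↦ .mul ?_ ?_)
  · exact differentiableAt_cpow_mul hp (hdiff.const_sub 1) (by simpa using hy')
  · exact differentiableAt_cpow_mul hp hdiff hy
  · exact (g i).differentiableAt.comp z (hT _ i z)

lemma bddAbove_norm_steinPairing [Finite ι] (hp : 0 < p) (hp₀ : 1 < p₀) (hp₁ : 1 < p₁)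
    (hT : ∀ f i, ∃ C, ∀ z ∈ verticalClosedStrip 0 1, ‖T z f i‖ ≤ C)
    (ha : ∀ i, 0 ≤ a i) (ha' : ∀ i, a i ≤ 1) (hH : ∀ i, 0 ≤ H i) (hH' : ∀ i, H i ≤ 1)
    (hg : ∀ i, ‖g i‖ ≤ 1) :
    BddAbove ((norm ∘ steinPairing p p₀ p₁ T a u H g) '' verticalClosedStrip 0 1) := by
  classical
  cases nonempty_fintype ι
  choose C hC using fun j ↦ hT (Pi.single j (u j))
  refine ⟨∑ i, 1 * ∑ j, 1 * (1 * C j i), ?_⟩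
  rintro _ ⟨z, hz, rfl⟩
  obtain ⟨hy, hy'⟩ := reciprocalExponent_re_mem_Ioo hp₀ hp₁ hz
  rw [Function.comp_apply, steinPairing_eq_sum_single]
  refine norm_sum_le_of_le _ fun i _ ↦ norm_mul_le_of_le ?_ <|
    norm_sum_le_of_le _ fun j _ ↦ norm_mul_le_of_le ?_ ?_
  · exact norm_cpow_mul_le_one (hH i) (hH' i) hp (by simpa using hy')
  · exact norm_cpow_mul_le_one (ha j) (ha' j) hp hy
  · exact ((g i).le_of_opNorm_le (hg i) _).trans (by gcongr; exact hC j i z hz)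

lemma norm_steinPairing_le [Fintype ι] {q K : ℝ} {z : ℂ} (hp : 0 < p) (hq : 1 < q) (hK : 0 ≤ K)
    (hz : (reciprocalExponent p₀ p₁ z).re = q⁻¹)
    (hT : ∀ f, ellNorm q (T z f) ≤ K * ellNorm q f)
    (ha : ∀ i, 0 ≤ a i) (ha' : ∑ i, a i ^ p = 1) (hu : ∀ i, ‖u i‖ ≤ 1)
    (hH : ∀ i, 0 ≤ H i) (hH' : ∑ i, H i ^ p = 1) (hg : ∀ i, ‖g i‖ ≤ 1) :
    ‖steinPairing p p₀ p₁ T a u H g z‖ ≤ K := by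
  set y := reciprocalExponent p₀ p₁ z
  have hy : 0 < y.re := by rw [hz]; positivity
  have hy' : 0 < (1 - y).re := by
    simpa only [Complex.sub_re, Complex.one_re, hz, sub_pos] using inv_lt_one_of_one_lt₀ hq
  have hvec := ellNorm_cpow_smul_le_one hp ha ha' hu hy
  have hdual := ellNorm_cpow_smul_le_one (u := fun _ ↦ (1 : ℂ)) hp hH hH' (by simp) hy'
  simp only [smul_eq_mul, mul_one] at hdual
  rw [hz, inv_inv] at hvec
  calc ‖steinPairing p p₀ p₁ T a u H g z‖
      ≤ ellNorm (1 - y).re⁻¹ _ * ellNorm q (T z _) :=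
        norm_sum_mul_apply_le (inv_inv q ▸ .inv_inv hy' (by positivity) (by simp [hz])) _ hg _
    _ ≤ 1 * (K * 1) := by
        gcongr
        · exact ellNorm_nonneg _
        · exact (hT _).trans (by gcongr)
    _ = K := by ring

end SteinPairing

variable [Fintype ι]

/-- A family of operators to which Stein's interpolation theorem applies: entire, bounded on the
strip `0 ≤ Re z ≤ 1`, and uniformly bounded on `ℓ_{p₀}` and on `ℓ_{p₁}` on its two edges. -/
structure IsSteinFamily (p₀ p₁ K₀ K₁ : ℝ) (T : ℂ → (ι → E) →ₗ[ℂ] (κ → F)) : Prop where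
  one_lt_left : 1 < p₀
  one_lt_right : 1 < p₁
  nonneg_left : 0 ≤ K₀
  nonneg_right : 0 ≤ K₁
  differentiable : ∀ f i, Differentiable ℂ fun z ↦ T z f i
  exists_bound : ∀ f i, ∃ C, ∀ z ∈ verticalClosedStrip 0 1, ‖T z f i‖ ≤ C
  le_left : ∀ z : ℂ, z.re = 0 → ∀ f, ellNorm p₀ (T z f) ≤ K₀ * ellNorm p₀ f
  le_right : ∀ z : ℂ, z.re = 1 → ∀ f, ellNorm p₁ (T z f) ≤ K₁ * ellNorm p₁ f

namespace IsSteinFamily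

variable {K₀ K₁ : ℝ} {T : ℂ → (ι → E) →ₗ[ℂ] (κ → F)}

lemma ellNorm_le_of_sum_eq_one (hT : IsSteinFamily p₀ p₁ K₀ K₁ T) (hp : 0 < p)
    (hθ : (θ : ℂ) ∈ verticalClosedStrip 0 1) (hpθ : p⁻¹ = (1 - θ) * p₀⁻¹ + θ * p₁⁻¹)
    {a : ι → ℝ} {u : ι → E} (ha : ∀ i, 0 ≤ a i) (ha' : ∑ i, a i ^ p = 1) (hu : ∀ i, ‖u i‖ ≤ 1) :
    ellNorm p (T θ fun i ↦ (a i : ℂ) • u i) ≤ K₀ ^ (1 - θ) * K₁ ^ θ := by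
  have hK : 0 ≤ K₀ ^ (1 - θ) * K₁ ^ θ :=
    mul_nonneg (Real.rpow_nonneg hT.nonneg_left _) (Real.rpow_nonneg hT.nonneg_right _)
  refine ellNorm_le_of_forall_pairing_le hp hK _ fun H g hH hH' hg ↦ ?_
  have hdiff : DiffContOnCl ℂ (steinPairing p p₀ p₁ T a u H g) (verticalStrip 0 1) := by
    refine DifferentiableOn.diffContOnCl fun z hz ↦ ?_
    rw [verticalStrip, Complex.closure_preimage_re, closure_Ioo zero_ne_one] at hz
    exact (differentiableAt_steinPairing hp hT.one_lt_left hT.one_lt_right hT.differentiable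
      hz).differentiableWithinAt
  have hbdd := bddAbove_norm_steinPairing hp hT.one_lt_left hT.one_lt_right hT.exists_bound
    (u := u) ha (le_one_of_sum_rpow_eq_one hp ha ha') hH (le_one_of_sum_rpow_eq_one hp hH hH') hg
  have hinterp := norm_le_interp_of_mem_verticalClosedStrip₀₁' _ hθ hdiff hbdd
    (fun z hz ↦ norm_steinPairing_le hp hT.one_lt_left hT.nonneg_left
      (by simp_all [reciprocalExponent_re]) (hT.le_left z hz) ha ha' hu hH hH' hg)
    (fun z hz ↦ norm_steinPairing_le hp hT.one_lt_right hT.nonneg_right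
      (by simp_all [reciprocalExponent_re]) (hT.le_right z hz) ha ha' hu hH hH' hg)
  have hy : reciprocalExponent p₀ p₁ θ = (p⁻¹ : ℝ) := by
    rw [hpθ, reciprocalExponent]; push_cast; ring
  have hone : (p : ℂ) * (p⁻¹ : ℝ) = 1 := by
    rw [← Complex.ofReal_mul, mul_inv_cancel₀ hp.ne', Complex.ofReal_one]
  have hexp : (p : ℂ) * (1 - (p⁻¹ : ℝ)) = (p - 1 : ℝ) := by
    rw [mul_sub, mul_one, hone, Complex.ofReal_sub, Complex.ofReal_one]
  simpa only [steinPairing, hy, hexp, hone, Complex.cpow_one, Complex.ofReal_cpow (hH _),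
    Complex.ofReal_re] using hinterp

theorem ellNorm_le (hT : IsSteinFamily p₀ p₁ K₀ K₁ T) (hθ : (θ : ℂ) ∈ verticalClosedStrip 0 1)
    (hpθ : p⁻¹ = (1 - θ) * p₀⁻¹ + θ * p₁⁻¹) (f : ι → E) :
    ellNorm p (T θ f) ≤ K₀ ^ (1 - θ) * K₁ ^ θ * ellNorm p f := by
  obtain ⟨hpos, hlt⟩ : p⁻¹ ∈ Set.Ioo 0 1 := by
    simpa [reciprocalExponent_re, hpθ] using
      reciprocalExponent_re_mem_Ioo hT.one_lt_left hT.one_lt_right hθ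
  have hp : 1 < p := (inv_lt_one₀ (inv_pos.1 hpos)).1 hlt
  have hp' : 0 < p := inv_pos.1 hpos
  rcases (ellNorm_nonneg (p := p) f).eq_or_lt with hf | hf
  · have : f = 0 := funext fun i ↦ norm_le_zero_iff.1 (hf ▸ norm_le_ellNorm hp' f i)
    simp [this, ellNorm, hp'.ne']
  obtain ⟨a, u, ha, ha', hu, hfau⟩ := exists_eq_ellNorm_smul hp' hf
  calc ellNorm p (T θ f)
      = ellNorm p (T θ ((ellNorm p f : ℂ) • fun i ↦ (a i : ℂ) • u i)) := by rw [← hfau]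
    _ = ellNorm p f * ellNorm p (T θ fun i ↦ (a i : ℂ) • u i) := by
        rw [map_smul, ellNorm_smul hp.le, Complex.norm_real, Real.norm_of_nonneg hf.le]
    _ ≤ ellNorm p f * (K₀ ^ (1 - θ) * K₁ ^ θ) := by
        gcongr
        exact hT.ellNorm_le_of_sum_eq_one hp' hθ hpθ ha ha' hu
    _ = _ := mul_comm _ _

end IsSteinFamily

end SteinInterpolation

section RhombusGrowth

open Complex Set

variable {E : Type*} [NormedAddCommGroup E] [NormedSpace ℂ E] {α r : ℝ}

/-- The rhombus with vertices `±1` and `±i r`. -/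
def rhombus (r : ℝ) : Set ℂ := {ρ | |ρ.re| + |ρ.im| / r ≤ 1}

/-- The exponent `2 - 2 arctan r / π`: times `π / 2`, it is the exterior angle `π - arctan r` at
which the sides of `rhombus r` meet the real axis. -/
def rhombusExponent (r : ℝ) : ℝ := 2 - 2 * Real.arctan r / Real.pi

lemma rhombusExponent_mul_pi_div_two (r : ℝ) :
    rhombusExponent r * (Real.pi / 2) = Real.pi - Real.arctan r := by
  have := Real.pi_ne_zero
  rw [rhombusExponent]
  field_simp

lemma one_le_rhombusExponent (r : ℝ) : 1 ≤ rhombusExponent r := by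
  have := rhombusExponent_mul_pi_div_two r
  have := Real.arctan_lt_pi_div_two r
  nlinarith [Real.pi_pos]

lemma rhombusExponent_lt_two (hr : 0 < r) : rhombusExponent r < 2 := by
  have := rhombusExponent_mul_pi_div_two r
  have := Real.arctan_pos.2 hr
  nlinarith [Real.pi_pos]

lemma add_one_div_sub_one_mem_rhombus {v : ℂ} (hr : 0 < r) (hv : |v.im| = r * -v.re) :
    (v + 1) / (v - 1) ∈ rhombus r := by
  have hre : 0 ≤ -v.re := nonneg_of_mul_nonneg_right (hv ▸ abs_nonneg v.im) hr
  have hnormSq : normSq (v - 1) = normSq v + 1 + 2 * -v.re := by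
    simp only [normSq_apply, sub_re, sub_im, one_re, one_im]; ring
  have hD : 0 < normSq (v - 1) := by linarith [normSq_nonneg v]
  have hdivre : ((v + 1) / (v - 1)).re = (normSq v - 1) / normSq (v - 1) := by
    rw [div_re, ← add_div]; congr 1
    simp only [normSq_apply, add_re, add_im, sub_re, sub_im, one_re, one_im]; ring
  have hdivim : ((v + 1) / (v - 1)).im = -(2 * v.im) / normSq (v - 1) := by
    rw [div_im, ← sub_div]; congr 1
    simp only [add_re, add_im, sub_re, sub_im, one_re, one_im]; ring
  have habs : |normSq v - 1| ≤ normSq v + 1 := abs_le.2 ⟨by linarith [normSq_nonneg v], by linarith⟩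
  rw [rhombus, mem_ofPred_eq, hdivre, hdivim, abs_div, abs_div, abs_neg, abs_mul, abs_two, hv,
    abs_of_pos hD, div_right_comm, ← add_div, div_le_one hD, hnormSq, mul_left_comm,
    mul_div_cancel_left₀ _ hr.ne']
  linarith

lemma cpow_eq_one_iff {w : ℂ} (hα : 0 < α) (hα2 : α < 2) (hw : 0 ≤ w.re) :
    w ^ (α : ℂ) = 1 ↔ w = 1 := by
  refine ⟨fun h ↦ ?_, fun h ↦ by simp [h]⟩
  have harg := abs_arg_le_pi_div_two_iff.2 hw
  have him : |(log w * α).im| < Real.pi := by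
    rw [im_mul_ofReal, log_im, abs_mul, abs_of_pos hα]
    nlinarith [Real.pi_pos]
  have hmul := cpow_mul (x := w) (y := α) (α : ℂ)⁻¹ (abs_lt.1 him).1 (abs_lt.1 him).2.le
  rwa [h, one_cpow, mul_inv_cancel₀ (mod_cast hα.ne'), cpow_one] at hmul

lemma abs_arg_eq_pi_div_two {w : ℂ} (hw : w.re = 0) (hw0 : w ≠ 0) : |arg w| = Real.pi / 2 := by
  refine (abs_arg_le_pi_div_two_iff.2 hw.ge).antisymm (not_lt.1 fun h ↦ ?_)
  rcases abs_arg_lt_pi_div_two_iff.1 h with h | h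
  · exact h.ne' hw
  · exact hw0 h

lemma abs_im_cpow_rhombusExponent {w : ℂ} (hr : 0 < r) (hw : w.re = 0) :
    |(w ^ (rhombusExponent r : ℂ)).im| = r * -(w ^ (rhombusExponent r : ℂ)).re := by
  have hα : 0 < rhombusExponent r := zero_lt_one.trans_le (one_le_rhombusExponent r)
  rcases eq_or_ne w 0 with rfl | hw0
  · simp [zero_cpow, hα.ne']
  have harg : |arg w * rhombusExponent r| = Real.pi - Real.arctan r := by
    rw [abs_mul, abs_arg_eq_pi_div_two hw hw0, abs_of_pos hα, mul_comm,
      rhombusExponent_mul_pi_div_two]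
  have hcos : Real.cos (arg w * rhombusExponent r) = -Real.cos (Real.arctan r) := by
    rw [← Real.cos_abs, harg, Real.cos_pi_sub]
  have hsin : |Real.sin (arg w * rhombusExponent r)| = r * Real.cos (Real.arctan r) := by
    rw [Real.abs_sin_eq_sin_abs_of_abs_le_pi (by linarith [Real.arctan_pos.2 hr]), harg,
      Real.sin_pi_sub, ← Real.tan_mul_cos (Real.cos_arctan_pos r).ne', Real.tan_arctan]
  rw [cpow_ofReal_re, cpow_ofReal_im, abs_mul, hsin, hcos, abs_of_nonneg (by positivity)]
  ring

/-- The function `(w - 1) / (w + 1) * ((w ^ α + 1) / (w ^ α - 1))` with its removable singularity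
at `1` filled in. -/
def regularizedQuotient (α : ℝ) (w : ℂ) : ℂ :=
  (w ^ (α : ℂ) + 1) / ((w + 1) * dslope (· ^ (α : ℂ)) 1 w)

lemma regularizedQuotient_of_ne_one {w : ℂ} (hw : w ≠ 1) :
    regularizedQuotient α w = (w - 1) / (w + 1) * ((w ^ (α : ℂ) + 1) / (w ^ (α : ℂ) - 1)) := by
  rw [regularizedQuotient, dslope_of_ne _ hw, slope_def_field, one_cpow, mul_div_assoc',
    div_div_eq_mul_div, div_mul_div_comm, mul_comm]

lemma add_one_ne_zero_of_re_nonneg {w : ℂ} (hw : 0 ≤ w.re) : w + 1 ≠ 0 := fun h ↦ by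
  have := congrArg re h
  simp only [add_re, one_re, zero_re] at this
  linarith

lemma dslope_cpow_ne_zero {w : ℂ} (hα : 0 < α) (hα2 : α < 2) (hw : 0 ≤ w.re) :
    dslope (· ^ (α : ℂ)) 1 w ≠ 0 := by
  rcases eq_or_ne w 1 with rfl | hw1
  · rw [dslope_same, (hasStrictDerivAt_cpow_const one_mem_slitPlane).hasDerivAt.deriv]
    simpa using hα.ne'
  · rw [dslope_of_ne _ hw1, slope_def_field, one_cpow]
    exact div_ne_zero (sub_ne_zero.2 (mt (cpow_eq_one_iff hα hα2 hw).1 hw1)) (sub_ne_zero.2 hw1)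

lemma closure_setOf_re_pos : closure {w : ℂ | 0 < w.re} = {w | 0 ≤ w.re} :=
  closure_setOfPred_lt_re 0

lemma diffContOnCl_regularizedQuotient (hα : 0 < α) (hα2 : α < 2) :
    DiffContOnCl ℂ (regularizedQuotient α) {w | 0 < w.re} := by
  have hnhds : {w : ℂ | 0 < w.re} ∈ nhds 1 :=
    (isOpen_lt continuous_const continuous_re).mem_nhds (by simp)
  have hpow : DifferentiableOn ℂ (fun w : ℂ ↦ w ^ (α : ℂ)) {w | 0 < w.re} := fun w hw ↦
    (differentiableAt_id.cpow_const (.inl hw)).differentiableWithinAt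
  have hpow' : ContinuousOn (fun w : ℂ ↦ w ^ (α : ℂ)) {w | 0 ≤ w.re} := fun w hw ↦
    (continuousAt_cpow_const_of_re_pos (.inl hw) (by simpa)).continuousWithinAt
  have hslope : DifferentiableOn ℂ (dslope (fun w : ℂ ↦ w ^ (α : ℂ)) 1) {w | 0 < w.re} :=
    (differentiableOn_dslope hnhds).2 hpow
  have hnhds' : {w : ℂ | 0 ≤ w.re} ∈ nhds 1 :=
    Filter.mem_of_superset hnhds fun w (hw : 0 < w.re) ↦ hw.le
  have hslope' : ContinuousOn (dslope (fun w : ℂ ↦ w ^ (α : ℂ)) 1) {w | 0 ≤ w.re} :=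
    (continuousOn_dslope hnhds').2 ⟨hpow', hpow.differentiableAt hnhds⟩
  refine ⟨?_, closure_setOf_re_pos ▸ ?_⟩
  · exact (hpow.add_const 1).fun_div ((differentiableOn_id.add_const 1).fun_mul hslope) fun w hw ↦
      mul_ne_zero (add_one_ne_zero_of_re_nonneg (le_of_lt hw))
        (dslope_cpow_ne_zero hα hα2 (le_of_lt hw))
  · exact (hpow'.add continuousOn_const).div ((continuousOn_id.add continuousOn_const).mul hslope')
      fun w hw ↦ mul_ne_zero (add_one_ne_zero_of_re_nonneg hw) (dslope_cpow_ne_zero hα hα2 hw)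

lemma norm_sub_one_div_add_one_le_one {w : ℂ} (hw : 0 ≤ w.re) : ‖(w - 1) / (w + 1)‖ ≤ 1 := by
  rw [norm_div, div_le_one (norm_pos_iff.2 (add_one_ne_zero_of_re_nonneg hw)),
    ← sq_le_sq₀ (norm_nonneg _) (norm_nonneg _), Complex.sq_norm, Complex.sq_norm]
  simp only [normSq_apply, sub_re, sub_im, add_re, add_im, one_re, one_im]
  linarith

lemma norm_sub_one_div_add_one_eq_one {w : ℂ} (hw : w.re = 0) : ‖(w - 1) / (w + 1)‖ = 1 := by
  have hnorm : ‖w - 1‖ = ‖w + 1‖ := by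
    rw [← sq_eq_sq₀ (norm_nonneg _) (norm_nonneg _), Complex.sq_norm, Complex.sq_norm]
    simp only [normSq_apply, sub_re, sub_im, add_re, add_im, one_re, one_im, hw]
    ring
  rw [norm_div, hnorm, div_self (norm_ne_zero_iff.2 (add_one_ne_zero_of_re_nonneg hw.ge))]

lemma norm_regularizedQuotient_le {w : ℂ} (hα : 1 ≤ α) (hw : 0 ≤ w.re) (hw2 : 2 ≤ ‖w‖) :
    ‖regularizedQuotient α w‖ ≤ 3 := by
  have hne : w ≠ 1 := by rintro rfl; norm_num at hw2
  have hpow : 2 ≤ ‖w ^ (α : ℂ)‖ := by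
    rw [norm_cpow_real]
    exact hw2.trans (Real.self_le_rpow_of_one_le (by linarith) hα)
  have hsub : ‖w ^ (α : ℂ)‖ - 1 ≤ ‖w ^ (α : ℂ) - 1‖ := by
    simpa using norm_sub_norm_le (w ^ (α : ℂ)) 1
  have hadd : ‖w ^ (α : ℂ) + 1‖ ≤ ‖w ^ (α : ℂ)‖ + 1 := by
    simpa using norm_add_le (w ^ (α : ℂ)) 1
  have hquot : ‖(w ^ (α : ℂ) + 1) / (w ^ (α : ℂ) - 1)‖ ≤ 3 := by
    rw [norm_div, div_le_iff₀ (by linarith)]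
    linarith
  rw [regularizedQuotient_of_ne_one hne, norm_mul]
  exact (mul_le_mul (norm_sub_one_div_add_one_le_one hw) hquot (norm_nonneg _) zero_le_one).trans
    (by norm_num)

/-- The values of `∑ z ^ k • a k` at `z = (w ^ α + 1) / (w ^ α - 1)`, multiplied by
`((w - 1) / (w + 1)) ^ d` so as to become regular at `w = 1`. -/
def rhombusPullback (α : ℝ) (d : ℕ) (a : ℕ → E) (w : ℂ) : E :=
  ∑ k ∈ Finset.range (d + 1),
    (regularizedQuotient α w ^ k * ((w - 1) / (w + 1)) ^ (d - k)) • a k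

lemma rhombusPullback_of_ne_one (d : ℕ) (a : ℕ → E) {w : ℂ} (hw : w ≠ 1) :
    rhombusPullback α d a w = ((w - 1) / (w + 1)) ^ d •
      ∑ k ∈ Finset.range (d + 1), ((w ^ (α : ℂ) + 1) / (w ^ (α : ℂ) - 1)) ^ k • a k := by
  rw [rhombusPullback, Finset.smul_sum]
  refine Finset.sum_congr rfl fun k hk ↦ ?_
  rw [smul_smul, regularizedQuotient_of_ne_one hw, mul_pow, mul_right_comm, ← pow_add,
    Nat.add_sub_of_le (Finset.mem_range_succ_iff.1 hk)]

lemma diffContOnCl_rhombusPullback (hα : 0 < α) (hα2 : α < 2) (d : ℕ) (a : ℕ → E) :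
    DiffContOnCl ℂ (rhombusPullback α d a) {w | 0 < w.re} := by
  have hφ : DiffContOnCl ℂ (fun w : ℂ ↦ (w - 1) / (w + 1)) {w | 0 < w.re} :=
    DifferentiableOn.diffContOnCl fun w hw ↦ by
      rw [closure_setOf_re_pos] at hw
      have hne := add_one_ne_zero_of_re_nonneg hw
      exact DifferentiableAt.differentiableWithinAt (by fun_prop (disch := exact hne))
  have hR := diffContOnCl_regularizedQuotient hα hα2
  unfold rhombusPullback
  exact ⟨.fun_sum fun k _ ↦
      ((hR.differentiableOn.fun_pow k).fun_mul (hφ.differentiableOn.fun_pow _)).smul_const (a k),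
    continuousOn_finsetSum _ fun k _ ↦
      ((hR.continuousOn.pow k).mul (hφ.continuousOn.pow _)).smul continuousOn_const⟩

lemma norm_rhombusPullback_le (hα : 1 ≤ α) (d : ℕ) (a : ℕ → E) {w : ℂ} (hw : 0 ≤ w.re)
    (hw2 : 2 ≤ ‖w‖) :
    ‖rhombusPullback α d a w‖ ≤ ∑ k ∈ Finset.range (d + 1), 3 ^ k * ‖a k‖ := by
  refine norm_sum_le_of_le _ fun k _ ↦ ?_
  rw [norm_smul, norm_mul, norm_pow, norm_pow]
  gcongr
  exact (mul_le_of_le_one_right (by positivity)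
    (pow_le_one₀ (norm_nonneg _) (norm_sub_one_div_add_one_le_one hw))).trans
    (pow_le_pow_left₀ (norm_nonneg _) (norm_regularizedQuotient_le hα hw hw2) k)

lemma norm_rhombusPullback_le_of_rhombus (hr : 0 < r) {d : ℕ} {a : ℕ → E} {M : ℝ}
    (ha : ∀ ρ ∈ rhombus r, ‖∑ k ∈ Finset.range (d + 1), ρ ^ k • a k‖ ≤ M) {w : ℂ}
    (hw : 0 ≤ w.re) : ‖rhombusPullback (rhombusExponent r) d a w‖ ≤ M := by
  have hα := one_le_rhombusExponent r
  have hbound {w : ℂ} (hw : 0 ≤ w.re) (hw2 : 2 ≤ ‖w‖) := norm_rhombusPullback_le hα d a hw hw2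
  refine PhragmenLindelof.right_half_plane_of_bounded_on_real
    (diffContOnCl_rhombusPullback (zero_lt_one.trans_le hα) (rhombusExponent_lt_two hr) d a)
    ⟨1, one_lt_two, 0, ?_⟩ ?_ (fun x ↦ ?_) hw
  · refine .of_bound (∑ k ∈ Finset.range (d + 1), 3 ^ k * ‖a k‖) ?_
    filter_upwards [Filter.mem_inf_of_left (eventually_cobounded_le_norm 2),
      Filter.mem_inf_of_right (Filter.mem_principal_self _)] with w hw2 hw
    simpa using hbound (le_of_lt hw) hw2
  · refine Filter.isBoundedUnder_of_eventually_le
      (a := ∑ k ∈ Finset.range (d + 1), 3 ^ k * ‖a k‖) ?_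
    filter_upwards [Filter.eventually_ge_atTop 2] with x hx
    exact hbound (by simpa using zero_le_two.trans hx)
      (by rwa [norm_real, Real.norm_of_nonneg (by linarith)])
  · have hre : ((x : ℂ) * I).re = 0 := by simp
    have hne : (x : ℂ) * I ≠ 1 := fun h ↦ by simp [h] at hre
    rw [rhombusPullback_of_ne_one d a hne, norm_smul, norm_pow,
      norm_sub_one_div_add_one_eq_one hre, one_pow, one_mul]
    exact ha _ (add_one_div_sub_one_mem_rhombus hr (abs_im_cpow_rhombusExponent hr hre))

theorem norm_sum_smul_le_of_rhombus (hr : 0 < r) {d : ℕ} {a : ℕ → E} {M u : ℝ}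
    (ha : ∀ ρ ∈ rhombus r, ‖∑ k ∈ Finset.range (d + 1), ρ ^ k • a k‖ ≤ M) (hu : 1 < u) :
    ‖∑ k ∈ Finset.range (d + 1),
        ((((u ^ rhombusExponent r + 1) / (u ^ rhombusExponent r - 1) : ℝ) : ℂ)) ^ k • a k‖ ≤
      ((u + 1) / (u - 1)) ^ d * M := by
  have hne : (u : ℂ) ≠ 1 := mod_cast hu.ne'
  have hle := norm_rhombusPullback_le_of_rhombus hr ha (w := u) (by simpa using by linarith)
  have hφ : ‖((u : ℂ) - 1) / (u + 1)‖ = (u - 1) / (u + 1) := by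
    rw [← ofReal_one, ← ofReal_sub, ← ofReal_add, ← ofReal_div, norm_real,
      Real.norm_of_nonneg (div_nonneg (by linarith) (by linarith))]
  rw [rhombusPullback_of_ne_one d a hne, norm_smul, norm_pow, hφ,
    ← ofReal_cpow (by linarith)] at hle
  push_cast
  rwa [← inv_div (u - 1), inv_pow, ← div_eq_inv_mul,
    le_div_iff₀ (pow_pos (div_pos (by linarith) (by linarith)) d), mul_comm]

lemma two_mul_add_one_div_two_mul_sub_one_pow_le {d : ℕ} (hd : 1 ≤ d) :
    (((2 * d + 1) / (2 * d - 1) : ℝ)) ^ d ≤ 9 := by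
  have hd' : (1 : ℝ) ≤ d := mod_cast hd
  have hle : (2 * d + 1) / (2 * d - 1) ≤ Real.exp (2 / d) := calc
    (2 * d + 1) / (2 * d - 1) ≤ 2 / (d : ℝ) + 1 := by
      rw [div_add_one (by positivity), div_le_div_iff₀ (by linarith) (by linarith)]
      nlinarith
    _ ≤ Real.exp (2 / d) := Real.add_one_le_exp _
  calc ((2 * d + 1) / (2 * d - 1) : ℝ) ^ d
      ≤ Real.exp (2 / d) ^ d := pow_le_pow_left₀ (div_nonneg (by linarith) (by linarith)) hle d
    _ = Real.exp 1 ^ 2 := by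
      rw [← Real.exp_nat_mul, ← Real.exp_nat_mul]
      congr 1
      push_cast
      field_simp
    _ ≤ 3 ^ 2 := pow_le_pow_left₀ (Real.exp_pos 1).le Real.exp_one_lt_three.le 2
    _ = 9 := by norm_num

lemma inv_div_sub_one {v : ℝ} (hv : 1 < v) : ((v + 1) / (v - 1) - 1)⁻¹ = (v - 1) / 2 := by
  rw [div_sub_one (by linarith), inv_div]
  ring

theorem exists_norm_sum_smul_le_of_rhombus (E : Type*) [NormedAddCommGroup E] [NormedSpace ℂ E]
    (hr : 0 < r) {d : ℕ} (hd : 1 ≤ d) :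
    ∃ z : ℝ, 1 < z ∧ (z - 1)⁻¹ ≤ 2 * (d : ℝ) ^ rhombusExponent r ∧ ∀ (a : ℕ → E) (M : ℝ),
      (∀ ρ ∈ rhombus r, ‖∑ k ∈ Finset.range (d + 1), ρ ^ k • a k‖ ≤ M) →
        ‖∑ k ∈ Finset.range (d + 1), (z : ℂ) ^ k • a k‖ ≤ 9 * M := by
  have hd' : (1 : ℝ) ≤ d := mod_cast hd
  have hα := one_le_rhombusExponent r
  have hv : 1 < (2 * d : ℝ) ^ rhombusExponent r :=
    Real.one_lt_rpow (by linarith) (by linarith)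
  refine ⟨_, (one_lt_div (sub_pos.2 hv)).2 (by linarith), ?_, fun a M ha ↦
    (norm_sum_smul_le_of_rhombus hr ha (u := 2 * d) (by linarith)).trans ?_⟩
  · have h4 : (2 : ℝ) ^ rhombusExponent r ≤ 4 := calc
      (2 : ℝ) ^ rhombusExponent r ≤ 2 ^ (2 : ℝ) :=
        Real.rpow_le_rpow_of_exponent_le one_le_two (rhombusExponent_lt_two hr).le
      _ = 4 := by norm_num
    rw [inv_div_sub_one hv, Real.mul_rpow zero_le_two (by positivity)]
    nlinarith [mul_le_mul_of_nonneg_right h4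
      (Real.rpow_nonneg (zero_le_one.trans hd') (rhombusExponent r))]
  · have hM : 0 ≤ M := (norm_nonneg _).trans (ha 0 (by simp [rhombus]))
    exact mul_le_mul_of_nonneg_right (two_mul_add_one_div_two_mul_sub_one_pow_le hd) hM

end RhombusGrowth

section WalshMultiplier

variable {n : ℕ}

lemma sgn_mul_self (b : Bool) : sgn b * sgn b = 1 := by
  cases b <;> norm_num [sgn]

lemma sum_finset_walsh_mul_walsh (ε δ : Fin n → Bool) :
    ∑ A, walsh A ε * walsh A δ = if ε = δ then 2 ^ n else 0 := by
  simp only [walsh, ← Finset.prod_mul_distrib]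
  rw [← Finset.powerset_univ, ← Finset.prod_one_add]
  split_ifs with h
  · simp only [h, sgn_mul_self, Finset.prod_const, Finset.card_univ, Fintype.card_fin]
    norm_num
  · obtain ⟨i, hi⟩ := Function.ne_iff.1 h
    refine Finset.prod_eq_zero (Finset.mem_univ i) ?_
    cases hε : ε i <;> cases hδ : δ i <;> simp_all [sgn]

lemma walsh_eq_prod_univ (A : Finset (Fin n)) (ε : Fin n → Bool) :
    walsh A ε = ∏ i, if i ∈ A then sgn (ε i) else 1 := by
  rw [walsh, Finset.prod_ite_mem, Finset.univ_inter]

lemma sum_cube_walsh_mul_walsh (A B : Finset (Fin n)) :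
    ∑ ε, walsh A ε * walsh B ε = if A = B then 2 ^ n else 0 := by
  simp only [walsh_eq_prod_univ, ← Finset.prod_mul_distrib]
  rw [← Fintype.prod_sum fun i b ↦ (if i ∈ A then sgn b else 1) * if i ∈ B then sgn b else 1]
  split_ifs with h
  · have hfactor (i : Fin n) :
        ∑ b, (if i ∈ A then sgn b else 1) * (if i ∈ A then sgn b else 1) = 2 := by
      split_ifs <;> simp [sgn_mul_self]
    simp only [← h, hfactor, Finset.prod_const, Finset.card_univ, Fintype.card_fin]
  · obtain ⟨i, hi⟩ : ∃ i, ¬(i ∈ A ↔ i ∈ B) := by simpa [Finset.ext_iff] using h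
    refine Finset.prod_eq_zero (Finset.mem_univ i) ?_
    by_cases hA : i ∈ A <;> simp_all [sgn]

/-- The Fourier–Walsh expansion as a linear equivalence between functions on the cube and families
of coefficients. -/
def walshTransform (n : ℕ) (X : Type*) [NormedAddCommGroup X] [NormedSpace ℂ X] :
    ((Fin n → Bool) → X) ≃ₗ[ℂ] (Finset (Fin n) → X) where
  toFun := coeff
  invFun x ε := ∑ A, walsh A ε • x A
  map_add' f g := by
    ext A
    simp only [coeff, Pi.add_apply, smul_add, Finset.sum_add_distrib]
  map_smul' c f := by
    ext A
    simp only [coeff, Pi.smul_apply, Finset.smul_sum, RingHom.id_apply]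
    exact Finset.sum_congr rfl fun δ _ ↦ by rw [smul_comm (walsh A δ), smul_comm (_ : ℝ) c]
  left_inv f := by
    ext ε
    simp only [coeff, Finset.smul_sum, smul_smul, mul_left_comm _ (_ : ℝ)⁻¹]
    rw [Finset.sum_comm]
    simp only [← Finset.sum_smul, ← Finset.mul_sum, sum_finset_walsh_mul_walsh]
    simp
  right_inv x := by
    ext A
    simp only [coeff, Finset.smul_sum, smul_smul]
    rw [Finset.sum_comm]
    simp only [← Finset.sum_smul, ← Finset.mul_sum, sum_cube_walsh_mul_walsh]
    simp

lemma sum_walsh_smul_coeff (f : (Fin n → Bool) → X) (ε : Fin n → Bool) :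
    ∑ A, walsh A ε • coeff f A = f ε :=
  congrFun ((walshTransform n X).symm_apply_apply f) ε

lemma coeff_sum_walsh_smul (x : Finset (Fin n) → X) :
    coeff (fun ε ↦ ∑ A, walsh A ε • x A) = x :=
  (walshTransform n X).apply_symm_apply x

/-- The operator multiplying the Fourier–Walsh coefficient of `A` by `m A`. -/
def fourierMultiplier (n : ℕ) (X : Type*) [NormedAddCommGroup X] [NormedSpace ℂ X] :
    (Finset (Fin n) → ℂ) →ₐ[ℂ] Module.End ℂ ((Fin n → Bool) → X) :=
  ((walshTransform n X).symm.conjAlgEquiv ℂ).toAlgHom.comp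
    (Algebra.lsmul ℂ ℂ (Finset (Fin n) → X))

lemma fourierMultiplier_apply (m : Finset (Fin n) → ℂ) (f : (Fin n → Bool) → X)
    (ε : Fin n → Bool) :
    fourierMultiplier n X m f ε = ∑ A, walsh A ε • m A • coeff f A := rfl

lemma fourierMultiplier_walsh_smul (m : Finset (Fin n) → ℂ) (A : Finset (Fin n)) (x : X) :
    fourierMultiplier n X m (fun ε ↦ walsh A ε • x) = fun ε ↦ walsh A ε • m A • x := by
  have hsingle : (fun ε ↦ walsh A ε • x) = fun ε ↦ ∑ B, walsh B ε • (Pi.single A x : _ → X) B := by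
    ext ε
    simp [Pi.single_apply]
  ext ε
  rw [fourierMultiplier_apply, hsingle, coeff_sum_walsh_smul]
  simp [Pi.single_apply]

lemma walsh_piecewise (A B : Finset (Fin n)) (δ ε : Fin n → Bool) :
    walsh A (B.piecewise δ ε) = walsh (A ∩ B) δ * walsh (A \ B) ε := by
  rw [walsh, ← Finset.prod_inter_mul_prod_sdiff A B]
  exact congrArg₂ (· * ·)
    (Finset.prod_congr rfl fun i hi ↦ by simp [(Finset.mem_inter.1 hi).2])
    (Finset.prod_congr rfl fun i hi ↦ by simp [(Finset.mem_sdiff.1 hi).2])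

lemma fourierMultiplier_comp_piecewise (m : Finset (Fin n) → ℂ) (B : Finset (Fin n))
    (f : (Fin n → Bool) → X) (ε : Fin n → Bool) :
    fourierMultiplier n X m (fun δ ↦ f (B.piecewise δ ε)) =
      fun δ ↦ fourierMultiplier n X (fun A ↦ m (A ∩ B)) f (B.piecewise δ ε) := by
  have hexpand : (fun δ ↦ f (B.piecewise δ ε)) =
      ∑ A, fun δ ↦ walsh (A ∩ B) δ • walsh (A \ B) ε • coeff f A := by
    ext δ
    rw [← sum_walsh_smul_coeff f, Finset.sum_apply]
    simp only [walsh_piecewise, mul_smul]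
  ext δ
  rw [hexpand, map_sum, Finset.sum_apply, fourierMultiplier_apply]
  refine Finset.sum_congr rfl fun A _ ↦ ?_
  rw [fourierMultiplier_walsh_smul, walsh_piecewise, mul_smul, smul_comm (m _)]

lemma piecewise_piecewise_piecewise (B : Finset (Fin n)) (δ ε : Fin n → Bool) :
    B.piecewise (B.piecewise ε δ) (B.piecewise δ ε) = ε := by
  ext i
  by_cases hi : i ∈ B <;> simp [hi]

/-- The involution of pairs of points of the cube which exchanges the coordinates in `B`. -/
def swapCoordinates (B : Finset (Fin n)) : Equiv.Perm ((Fin n → Bool) × (Fin n → Bool)) :=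
  Function.Involutive.toPerm (fun x ↦ (B.piecewise x.2 x.1, B.piecewise x.1 x.2)) fun _ ↦
    Prod.ext (piecewise_piecewise_piecewise B _ _) (piecewise_piecewise_piecewise B _ _)

lemma ellNorm_comp_piecewise {E : Type*} [NormedAddCommGroup E] {p : ℝ} (f : (Fin n → Bool) → E)
    (B : Finset (Fin n)) :
    ellNorm p (Function.uncurry fun ε δ ↦ f (B.piecewise δ ε)) =
      (2 ^ n : ℝ) ^ (1 / p) * ellNorm p f := by
  have hcard : (Fintype.card (Fin n → Bool) : ℝ) = 2 ^ n := by simp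
  rw [← hcard, ← ellNorm_comp_fst (κ := Fin n → Bool)]
  exact ellNorm_comp_equiv (swapCoordinates B) fun x : _ × (Fin n → Bool) ↦ f x.1

/-- `K` bounds the norm on `L_p({-1,1}ⁿ; X)` of the operator with Fourier multiplier `m`. -/
structure IsMultiplierBound (X : Type*) [NormedAddCommGroup X] [NormedSpace ℂ X] (p : ℝ)
    (m : Finset (Fin n) → ℂ) (K : ℝ) : Prop where
  nonneg : 0 ≤ K
  le : ∀ f, ellNorm p (fourierMultiplier n X m f) ≤ K * ellNorm p f

namespace IsMultiplierBound

variable {p K K' : ℝ} {m m' : Finset (Fin n) → ℂ}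

lemma mono (h : IsMultiplierBound X p m K) (hK : K ≤ K') : IsMultiplierBound X p m K' where
  nonneg := h.nonneg.trans hK
  le f := (h.le f).trans (mul_le_mul_of_nonneg_right hK (ellNorm_nonneg f))

lemma one : IsMultiplierBound X p (1 : Finset (Fin n) → ℂ) 1 where
  nonneg := zero_le_one
  le f := by rw [map_one, Module.End.one_apply, one_mul]

lemma mul (h : IsMultiplierBound X p m K) (h' : IsMultiplierBound X p m' K') :
    IsMultiplierBound X p (m * m') (K * K') where
  nonneg := mul_nonneg h.nonneg h'.nonneg
  le f := by
    rw [map_mul, Module.End.mul_apply, mul_assoc]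
    exact (h.le _).trans (mul_le_mul_of_nonneg_left (h'.le f) h.nonneg)

lemma sum_smul {σ : Type*} (hp : 1 ≤ p) {s : Finset σ} {c : σ → ℂ} {m : σ → Finset (Fin n) → ℂ}
    {K : σ → ℝ} (h : ∀ k ∈ s, IsMultiplierBound X p (m k) (K k)) :
    IsMultiplierBound X p (∑ k ∈ s, c k • m k) (∑ k ∈ s, ‖c k‖ * K k) where
  nonneg := Finset.sum_nonneg fun k hk ↦ mul_nonneg (norm_nonneg _) (h k hk).nonneg
  le f := by
    rw [map_sum, LinearMap.sum_apply, Finset.sum_mul]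
    refine (ellNorm_sum_le hp _ _).trans (Finset.sum_le_sum fun k hk ↦ ?_)
    rw [map_smul, LinearMap.smul_apply, ellNorm_smul hp, mul_assoc]
    exact mul_le_mul_of_nonneg_left ((h k hk).le f) (norm_nonneg _)

lemma comp_inter (hp : 0 < p) (h : IsMultiplierBound X p m K) (B : Finset (Fin n)) :
    IsMultiplierBound X p (fun A ↦ m (A ∩ B)) K where
  nonneg := h.nonneg
  le f := by
    have hpairs := ellNorm_uncurry_le hp h.nonneg fun ε ↦
      fourierMultiplier_comp_piecewise m B f ε ▸ h.le fun δ ↦ f (B.piecewise δ ε)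
    rw [ellNorm_comp_piecewise, ellNorm_comp_piecewise, mul_left_comm] at hpairs
    exact le_of_mul_le_mul_left hpairs (by positivity)

end IsMultiplierBound

end WalshMultiplier

section BernoulliSubset

variable {n : ℕ}

/-- The probability of `B` for a random subset of `Fin n` containing each index independently with
probability `l`. -/
def bernoulliWeight (l : ℝ) (B : Finset (Fin n)) : ℝ := ∏ i, if i ∈ B then l else 1 - l

lemma bernoulliWeight_nonneg {l : ℝ} (hl : l ∈ Set.Icc 0 1) (B : Finset (Fin n)) :
    0 ≤ bernoulliWeight l B :=
  Finset.prod_nonneg fun i _ ↦ by split_ifs <;> [exact hl.1; exact sub_nonneg.2 hl.2]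

lemma sum_bernoulliWeight_mul_prod (l : ℝ) (A : Finset (Fin n)) (u v : Fin n → ℂ) :
    ∑ B, (bernoulliWeight l B : ℂ) * ∏ i ∈ A, (if i ∈ B then u i else v i) =
      ∏ i ∈ A, (l * u i + (1 - l) * v i) := by
  have hfactor (i : Fin n) : (if i ∈ A then l * u i + (1 - l) * v i else 1) =
      l * (if i ∈ A then u i else 1) + (1 - l) * (if i ∈ A then v i else 1) := by
    split_ifs <;> ring
  rw [← Finset.univ_inter A, ← Finset.prod_ite_mem Finset.univ]
  simp only [hfactor]
  rw [Finset.prod_add, Finset.powerset_univ]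
  refine Finset.sum_congr rfl fun B _ ↦ ?_
  conv_rhs => rw [← Finset.univ_inter B, Finset.sdiff_inter_self_left, ← Finset.prod_piecewise]
  rw [bernoulliWeight, Complex.ofReal_prod, ← Finset.prod_ite_mem, ← Finset.prod_mul_distrib]
  refine Finset.prod_congr rfl fun i _ ↦ ?_
  by_cases hi : i ∈ B <;> simp [hi]

lemma sum_bernoulliWeight (l : ℝ) : ∑ B : Finset (Fin n), bernoulliWeight l B = 1 := by
  simpa [← Complex.ofReal_sum] using sum_bernoulliWeight_mul_prod (n := n) l ∅ 0 0

lemma ellNorm_sum_bernoulliWeight_smul_le {ι E : Type*} [Fintype ι] [NormedAddCommGroup E]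
    [NormedSpace ℂ E] {p l M : ℝ} (hp : 1 ≤ p) (hl : l ∈ Set.Icc 0 1)
    {f : Finset (Fin n) → ι → E} (h : ∀ B, ellNorm p (f B) ≤ M) :
    ellNorm p (∑ B, (bernoulliWeight l B : ℂ) • f B) ≤ M :=
  calc ellNorm p (∑ B, (bernoulliWeight l B : ℂ) • f B)
      ≤ ∑ B, ellNorm p ((bernoulliWeight l B : ℂ) • f B) := ellNorm_sum_le hp _ _
    _ ≤ ∑ B, bernoulliWeight l B * M := Finset.sum_le_sum fun B _ ↦ by
        rw [ellNorm_smul hp, Complex.norm_real, Real.norm_of_nonneg (bernoulliWeight_nonneg hl B)]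
        exact mul_le_mul_of_nonneg_left (h B) (bernoulliWeight_nonneg hl B)
    _ = M := by rw [← Finset.sum_mul, sum_bernoulliWeight, one_mul]

lemma sum_bernoulliWeight_inter_eq_singleton (l : ℝ) {A : Finset (Fin n)} {i : Fin n}
    (hi : i ∈ A) :
    ∑ B, (bernoulliWeight l B : ℂ) * (if A ∩ B = {i} then 1 else 0) =
      l * (1 - l) ^ (A.card - 1) := by
  have hindicator (B : Finset (Fin n)) : (if A ∩ B = {i} then (1 : ℂ) else 0) =
      ∏ j ∈ A, if j ∈ B then (if j = i then 1 else 0) else if j = i then 0 else 1 := by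
    have hiff (j : Fin n) :
        (if j ∈ B then (if j = i then (1 : ℂ) else 0) else if j = i then 0 else 1) =
          if j ∈ B ↔ j = i then 1 else 0 := by
      split_ifs <;> simp_all
    simp only [hiff, Finset.prod_boole]
    congr 1
    simp only [Finset.ext_iff, Finset.mem_inter, Finset.mem_singleton, eq_iff_iff]
    grind
  have hne {j : Fin n} (hj : j ∈ A.erase i) : j ≠ i := Finset.ne_of_mem_erase hj
  simp only [hindicator]
  rw [sum_bernoulliWeight_mul_prod, ← Finset.mul_prod_erase A _ hi,
    Finset.prod_congr rfl fun j hj ↦ by rw [if_neg (hne hj), if_neg (hne hj)],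
    Finset.prod_const, Finset.card_erase_of_mem hi]
  simp

end BernoulliSubset

section Noise

variable {n : ℕ} {p l K K' : ℝ} {a b ρ : ℂ}

/-- The multiplier of the noise operator, which replaces `w_A` by `ρ ^ |A| w_A`. -/
def noise (ρ : ℂ) (A : Finset (Fin n)) : ℂ := ρ ^ A.card

/-- The multiplier of the projection onto the homogeneous part of degree `k`. -/
def level (k : ℕ) (A : Finset (Fin n)) : ℂ := if A.card = k then 1 else 0

lemma sum_pow_mul_level {N : ℕ} {A : Finset (Fin n)} (hA : A.card < N) (ρ : ℂ) :
    ∑ k ∈ Finset.range N, ρ ^ k * level k A = noise ρ A := by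
  simp [level, noise, hA]

lemma noise_one : noise (n := n) 1 = 1 := funext fun A ↦ one_pow A.card

lemma level_zero : level (n := n) 0 = noise 0 := by
  ext A
  simp [level, noise, zero_pow_eq]

lemma noise_add_eq_sum (l : ℝ) (a b : ℂ) :
    noise (n := n) (l * a + (1 - l) * b) = ∑ B, (bernoulliWeight l B : ℂ) •
      ((fun A ↦ noise a (A ∩ B)) * fun A ↦ noise b (A ∩ Bᶜ)) := by
  ext A
  have hprod (B : Finset (Fin n)) :
      noise a (A ∩ B) * noise b (A ∩ Bᶜ) = ∏ i ∈ A, if i ∈ B then a else b := by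
    rw [Finset.prod_ite, Finset.prod_const, Finset.prod_const, Finset.filter_mem_eq_inter,
      Finset.filter_notMem_eq_sdiff, Finset.sdiff_eq_inter_compl, noise, noise]
  simp only [Finset.sum_apply, Pi.smul_apply, Pi.mul_apply, smul_eq_mul, hprod]
  rw [sum_bernoulliWeight_mul_prod, Finset.prod_const, noise]

lemma level_one_eq_sum (A B : Finset (Fin n)) :
    level 1 (A ∩ B) = ∑ i ∈ A, if A ∩ B = {i} then 1 else 0 := by
  by_cases h : (A ∩ B).card = 1
  · obtain ⟨i, hi⟩ := Finset.card_eq_one.1 h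
    have hiA : i ∈ A := Finset.mem_of_mem_inter_left (hi ▸ Finset.mem_singleton_self i)
    simp [level, hi, hiA]
  · have hne (i : Fin n) : A ∩ B ≠ {i} := fun hi ↦ h (Finset.card_eq_one.2 ⟨i, hi⟩)
    simp [level, h, hne]

lemma level_one_mul_level (k : ℕ) (A B : Finset (Fin n)) :
    level 1 (A ∩ B) * level k (A ∩ Bᶜ) = level (k + 1) A * level 1 (A ∩ B) := by
  have hcard := Finset.card_inter_add_card_sdiff A B
  rw [Finset.sdiff_eq_inter_compl] at hcard
  simp only [level]
  split_ifs <;> first | omega | simp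

lemma smul_level_succ_eq_sum (l : ℝ) (k : ℕ) :
    ((k + 1) * (l * (1 - l) ^ k) : ℂ) • level (n := n) (k + 1) = ∑ B, (bernoulliWeight l B : ℂ) •
      ((fun A ↦ level 1 (A ∩ B)) * fun A ↦ level k (A ∩ Bᶜ)) := by
  ext A
  simp only [Finset.sum_apply, Pi.smul_apply, Pi.mul_apply, smul_eq_mul, level_one_mul_level]
  have hsum : ∑ B, (bernoulliWeight l B : ℂ) * level 1 (A ∩ B) =
      A.card * (l * (1 - l) ^ (A.card - 1)) := by
    simp only [level_one_eq_sum, Finset.mul_sum]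
    rw [Finset.sum_comm, Finset.sum_congr rfl fun i hi ↦
      sum_bernoulliWeight_inter_eq_singleton l hi, Finset.sum_const, nsmul_eq_mul]
  simp only [mul_left_comm _ (level (k + 1) A), ← Finset.mul_sum, hsum]
  rw [level]
  split_ifs with h
  · rw [h]; push_cast; simp
  · simp

namespace IsMultiplierBound

lemma bernoulli_average {m : Finset (Fin n) → Finset (Fin n) → ℂ} (hp : 1 ≤ p)
    (hl : l ∈ Set.Icc 0 1) (h : ∀ B, IsMultiplierBound X p (m B) K) :
    IsMultiplierBound X p (∑ B, (bernoulliWeight l B : ℂ) • m B) K where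
  nonneg := (h ∅).nonneg
  le f := by
    simp only [map_sum, map_smul, LinearMap.sum_apply, LinearMap.smul_apply]
    exact ellNorm_sum_bernoulliWeight_smul_le hp hl fun B ↦ (h B).le f

lemma noise_add (hp : 1 ≤ p) (hl : l ∈ Set.Icc 0 1)
    (ha : IsMultiplierBound X p (noise (n := n) a) K)
    (hb : IsMultiplierBound X p (noise (n := n) b) K') :
    IsMultiplierBound X p (noise (n := n) (l * a + (1 - l) * b)) (K * K') := by
  have hp' := zero_lt_one.trans_le hp
  rw [noise_add_eq_sum]
  exact bernoulli_average hp hl fun B ↦ (ha.comp_inter hp' B).mul (hb.comp_inter hp' Bᶜ)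

lemma noise_neg_one : IsMultiplierBound X p (noise (n := n) (-1)) 1 where
  nonneg := zero_le_one
  le f := by
    have hwalsh (A : Finset (Fin n)) (ε : Fin n → Bool) :
        walsh A (fun i ↦ !ε i) = (-1) ^ A.card * walsh A ε := by
      have hsgn (b : Bool) : sgn (!b) = -1 * sgn b := by cases b <;> simp [sgn]
      simp only [walsh, hsgn, Finset.prod_mul_distrib, Finset.prod_const]
    have hreflect : fourierMultiplier n X (noise (-1)) f = f ∘ fun ε i ↦ !ε i := by
      ext ε
      rw [Function.comp_apply, ← sum_walsh_smul_coeff f, fourierMultiplier_apply]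
      refine Finset.sum_congr rfl fun A _ ↦ ?_
      rw [hwalsh, mul_comm, mul_smul, noise, ← Complex.coe_smul ((-1) ^ _)]
      push_cast
      rfl
    rw [hreflect, one_mul]
    exact (ellNorm_comp_equiv (Equiv.piCongrRight fun _ ↦ Equiv.boolNot) f).le

lemma noise_ofReal (hp : 1 ≤ p) {x : ℝ} (hx : x ∈ Set.Icc (-1) 1) :
    IsMultiplierBound X p (noise (n := n) x) 1 := by
  have hl : (1 + x) / 2 ∈ Set.Icc (0 : ℝ) 1 := ⟨by linarith [hx.1], by linarith [hx.2]⟩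
  have h := noise_add hp hl (noise_one (n := n) ▸ one) (noise_neg_one (X := X))
  rw [mul_one (1 : ℝ)] at h
  convert h using 2
  push_cast
  ring

lemma noise_of_mem_rhombus {r : ℝ} (hp : 1 ≤ p) (hr : 0 < r)
    (h : ∀ t : ℝ, |t| ≤ r → IsMultiplierBound X p (noise (n := n) (t * Complex.I)) K)
    (hρ : ρ ∈ rhombus r) : IsMultiplierBound X p (noise (n := n) ρ) K := by
  have him : |ρ.im| / r ≤ 1 - |ρ.re| := by linarith [Set.mem_ofPred_eq ▸ hρ]
  have hre : |ρ.re| ≤ 1 := by linarith [div_nonneg (abs_nonneg ρ.im) hr.le]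
  have hsign : abs (ρ.re / |ρ.re|) ≤ 1 := by simpa [abs_div] using div_self_le_one |ρ.re|
  have hheight : |ρ.im / (1 - |ρ.re|)| ≤ r := by
    rw [abs_div, abs_of_nonneg (sub_nonneg.2 hre)]
    exact div_le_of_le_mul₀ (sub_nonneg.2 hre) hr.le (by rwa [div_le_iff₀' hr] at him)
  have hmix := noise_add hp ⟨abs_nonneg _, hre⟩ (noise_ofReal (n := n) (X := X) hp (abs_le.1 hsign))
    (h _ hheight)
  rw [one_mul] at hmix
  have hre' : |ρ.re| * (ρ.re / |ρ.re|) = ρ.re := mul_div_cancel_of_imp' (by simp)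
  have him' : (1 - |ρ.re|) * (ρ.im / (1 - |ρ.re|)) = ρ.im := mul_div_cancel_of_imp' fun h0 ↦ by
    rw [h0, div_le_iff₀ hr, zero_mul] at him
    exact abs_nonpos_iff.1 him
  convert hmix using 2
  rw [← Complex.ofReal_one, ← Complex.ofReal_sub, ← mul_assoc, ← Complex.ofReal_mul,
    ← Complex.ofReal_mul, hre', him', Complex.re_add_im]

lemma noise_of_level (hp : 1 ≤ p)
    (h : ∀ k, IsMultiplierBound X p (level (n := n) k) (K ^ k)) (hρ : ‖ρ‖ * K ≤ 1 / 2) :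
    IsMultiplierBound X p (noise (n := n) ρ) 2 := by
  have hK : 0 ≤ K := by simpa using (h 1).nonneg
  have hnoise : noise (n := n) ρ = ∑ k ∈ Finset.range (n + 1), ρ ^ k • level k := by
    ext A
    have hA : A.card < n + 1 := Nat.lt_succ_of_le (by simpa using A.card_le_univ)
    simp only [Finset.sum_apply, Pi.smul_apply, smul_eq_mul, sum_pow_mul_level hA]
  rw [hnoise]
  refine (sum_smul hp fun k _ ↦ h k).mono ?_
  calc ∑ k ∈ Finset.range (n + 1), ‖ρ ^ k‖ * K ^ k
      ≤ ∑ k ∈ Finset.range (n + 1), (1 / 2) ^ k := Finset.sum_le_sum fun k _ ↦ by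
        rw [norm_pow, ← mul_pow]
        exact pow_le_pow_left₀ (by positivity) hρ k
    _ ≤ 2 := sum_geometric_two_le (n + 1)

end IsMultiplierBound

end Noise

section KConvex

variable {n : ℕ} {p q K L : ℝ}

lemma lpNorm_eq_mul_ellNorm {E : Type*} [NormedAddCommGroup E] (f : (Fin n → Bool) → E) :
    lpNorm p f = ((2 ^ n : ℝ)⁻¹) ^ (1 / p) * ellNorm p f :=
  Real.mul_rpow (by positivity) (by positivity)

lemma lpNorm_nonneg {E : Type*} [NormedAddCommGroup E] (f : (Fin n → Bool) → E) :
    0 ≤ lpNorm p f := by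
  unfold lpNorm; positivity

lemma rad_eq_fourierMultiplier (f : (Fin n → Bool) → X) :
    Rad f = fourierMultiplier n X (level 1) f := by
  ext ε
  have hfilter : (Finset.univ.filter fun A : Finset (Fin n) ↦ A.card = 1) =
      Finset.univ.map ⟨fun i ↦ {i}, Finset.singleton_injective⟩ := by
    ext A
    simp [Finset.card_eq_one, eq_comm]
  simp only [fourierMultiplier_apply, level, ite_smul, one_smul, zero_smul, smul_ite, smul_zero]
  rw [← Finset.sum_filter, hfilter, Finset.sum_map]
  simp [Rad, walsh]

lemma KConvex.exists_isMultiplierBound_level_one (hX : KConvex X) :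
    ∃ q, 1 < q ∧ ∃ K, ∀ n, IsMultiplierBound X q (level (n := n) 1) K := by
  obtain ⟨q, hq, M, hM⟩ := hX
  refine ⟨q, hq, max M 0, fun n ↦ ⟨le_max_right _ _, fun f ↦ ?_⟩⟩
  have hrad := hM n f
  rw [lpNorm_eq_mul_ellNorm, lpNorm_eq_mul_ellNorm, rad_eq_fourierMultiplier, mul_left_comm] at hrad
  exact (le_of_mul_le_mul_left hrad (by positivity)).trans
    (mul_le_mul_of_nonneg_right (le_max_left _ _) (ellNorm_nonneg f))

lemma one_third_le_one_sub_inv_pow (k : ℕ) : 1 / 3 ≤ (1 - 1 / (k + 1 : ℝ)) ^ k := by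
  rcases k.eq_zero_or_pos with rfl | hk
  · norm_num
  have hk' : (0 : ℝ) < k := mod_cast hk
  have hinv : (1 - 1 / (k + 1 : ℝ)) = (1 + 1 / k : ℝ)⁻¹ := by field_simp; ring
  rw [hinv, inv_pow, one_div]
  refine inv_anti₀ (by positivity) ?_
  calc (1 + 1 / k : ℝ) ^ k ≤ Real.exp (1 / k) ^ k :=
        pow_le_pow_left₀ (by positivity) (by linarith [Real.add_one_le_exp (1 / k : ℝ)]) k
    _ = Real.exp 1 := by rw [← Real.exp_nat_mul, mul_one_div_cancel hk'.ne']
    _ ≤ 3 := Real.exp_one_lt_three.le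

namespace IsMultiplierBound

lemma of_smul {m : Finset (Fin n) → ℂ} {c : ℂ} (hp : 1 ≤ p) (hc : c ≠ 0)
    (h : IsMultiplierBound X p (c • m) K) : IsMultiplierBound X p m (‖c‖⁻¹ * K) where
  nonneg := mul_nonneg (inv_nonneg.2 (norm_nonneg c)) h.nonneg
  le f := by
    have hf := h.le f
    rw [map_smul, LinearMap.smul_apply, ellNorm_smul hp] at hf
    rwa [mul_assoc, le_inv_mul_iff₀ (norm_pos_iff.2 hc)]

lemma level_succ (hp : 1 ≤ p) (h₁ : IsMultiplierBound X p (level (n := n) 1) K) {k : ℕ}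
    (hk : IsMultiplierBound X p (level (n := n) k) L) :
    IsMultiplierBound X p (level (n := n) (k + 1)) (3 * (K * L)) := by
  have hp' := zero_lt_one.trans_le hp
  set l : ℝ := 1 / (k + 1)
  have hl : l ∈ Set.Icc 0 1 :=
    ⟨by positivity, div_le_one_of_le₀ (by simp) (by positivity)⟩
  have hc := one_third_le_one_sub_inv_pow k
  have havg := bernoulli_average hp hl fun B ↦
    (h₁.comp_inter hp' B).mul (hk.comp_inter hp' Bᶜ)
  have hcoeff : ((k + 1) * (l * (1 - l) ^ k) : ℂ) = ((1 - l) ^ k : ℝ) := by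
    have : (k + 1 : ℂ) ≠ 0 := Nat.cast_add_one_ne_zero k
    simp only [l]
    push_cast
    field_simp
  rw [← smul_level_succ_eq_sum, hcoeff] at havg
  refine (havg.of_smul hp ?_).mono (mul_le_mul_of_nonneg_right ?_ (mul_nonneg h₁.nonneg hk.nonneg))
  · exact Complex.ofReal_ne_zero.2 (by linarith)
  · rw [Complex.norm_real, Real.norm_of_nonneg (by linarith)]
    exact inv_le_of_inv_le₀ (by norm_num) (by rwa [← one_div])

lemma level_of_level_one (hp : 1 ≤ p) (h : IsMultiplierBound X p (level (n := n) 1) K) (k : ℕ) :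
    IsMultiplierBound X p (level (n := n) k) ((3 * K) ^ k) := by
  induction k with
  | zero =>
    rw [level_zero, pow_zero]
    exact mod_cast noise_ofReal (n := n) (X := X) hp (x := 0) (by norm_num)
  | succ k ih =>
    rw [pow_succ', mul_assoc]
    exact h.level_succ hp ih

end IsMultiplierBound

end KConvex

section ImaginaryNoise

open Complex.HadamardThreeLines

variable {n : ℕ} {p q K : ℝ}

lemma exists_interpolation_exponent (hp : 1 < p) (q : ℝ) :
    ∃ θ ∈ Set.Ioo (0 : ℝ) 1, ∃ p₀, 1 < p₀ ∧ p⁻¹ = (1 - θ) * p₀⁻¹ + θ * q⁻¹ := by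
  have hp0 : 0 < p := zero_lt_one.trans hp
  have hcont : ContinuousAt (fun θ : ℝ ↦ (1 - θ) / (p⁻¹ - θ * q⁻¹)) 0 := by
    refine ContinuousAt.div (by fun_prop) (by fun_prop) ?_
    simpa using hp0.ne'
  have hevent : ∀ᶠ θ in nhds (0 : ℝ), 1 < (1 - θ) / (p⁻¹ - θ * q⁻¹) :=
    hcont.eventually_const_lt (by simpa using hp)
  obtain ⟨θ, hp₀, hθ⟩ :=
    ((hevent.filter_mono nhdsWithin_le_nhds).and (Ioo_mem_nhdsGT zero_lt_one)).exists
  refine ⟨θ, hθ, _, hp₀, ?_⟩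
  rw [inv_div, mul_div_cancel₀ _ (sub_ne_zero.2 hθ.2.ne')]
  ring

/-- A path of noise parameters for Stein interpolation: it is real on the imaginary axis, imaginary
on the real axis, and bounded on vertical strips. -/
def steinPath (t : ℝ) (z : ℂ) : ℂ := t * Complex.I * z * Complex.exp (z ^ 2)

lemma differentiable_steinPath (t : ℝ) : Differentiable ℂ (steinPath t) := by
  unfold steinPath
  fun_prop

lemma steinPath_ofReal (t x : ℝ) :
    steinPath t x = (t * (x * Real.exp (x ^ 2)) : ℝ) * Complex.I := by
  rw [steinPath]
  push_cast
  ring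

lemma steinPath_of_re_eq_zero (t : ℝ) {z : ℂ} (hz : z.re = 0) :
    steinPath t z = (-(t * z.im * Real.exp (-z.im ^ 2)) : ℝ) := by
  obtain ⟨y, rfl⟩ : ∃ y : ℝ, z = y * Complex.I := ⟨z.im, by apply Complex.ext <;> simp [hz]⟩
  rw [steinPath, mul_pow, Complex.I_sq]
  simp only [Complex.mul_im, Complex.ofReal_re, Complex.I_im, Complex.ofReal_im, Complex.I_re]
  push_cast
  ring_nf
  rw [Complex.I_sq]
  ring

lemma norm_steinPath_le (t : ℝ) {z : ℂ} (hz : z ∈ verticalClosedStrip 0 1) :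
    ‖steinPath t z‖ ≤ 6 * |t| := by
  obtain ⟨hz0, hz1⟩ : 0 ≤ z.re ∧ z.re ≤ 1 := hz
  have hsq : (z ^ 2).re ≤ 1 - z.im ^ 2 := by
    rw [sq z, Complex.mul_re]
    nlinarith
  have hnorm : ‖z‖ ≤ 2 * Real.exp (z.im ^ 2) := calc
    ‖z‖ ≤ |z.re| + |z.im| := Complex.norm_le_abs_re_add_abs_im z
    _ ≤ 1 + |z.im| := by gcongr; rwa [abs_of_nonneg hz0]
    _ ≤ 2 * (z.im ^ 2 + 1) := by nlinarith [sq_abs z.im, sq_nonneg (|z.im| - 1)]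
    _ ≤ 2 * Real.exp (z.im ^ 2) := by gcongr; exact Real.add_one_le_exp _
  calc ‖steinPath t z‖ = |t| * (‖z‖ * Real.exp (z ^ 2).re) := by
        simp [steinPath, Complex.norm_exp, mul_assoc]
    _ ≤ |t| * (2 * Real.exp (z.im ^ 2) * Real.exp (1 - z.im ^ 2)) := by gcongr
    _ = |t| * (2 * Real.exp 1) := by rw [mul_assoc, ← Real.exp_add, add_sub_cancel]
    _ ≤ |t| * (2 * 3) := by gcongr; exact Real.exp_one_lt_three.le
    _ = 6 * |t| := by ring

lemma isSteinFamily_noise_steinPath {p₀ t : ℝ} (hp₀ : 1 < p₀) (hq : 1 < q) (ht : 6 * |t| ≤ 1)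
    (h : ∀ z : ℂ, z.re = 1 → IsMultiplierBound X q (noise (n := n) (steinPath t z)) K) :
    IsSteinFamily p₀ q 1 K fun z ↦ fourierMultiplier n X (noise (steinPath t z)) where
  one_lt_left := hp₀
  one_lt_right := hq
  nonneg_left := zero_le_one
  nonneg_right := (h 1 Complex.one_re).nonneg
  differentiable f ε := by
    simp only [fourierMultiplier_apply, noise]
    exact .fun_sum fun A _ ↦
      (((differentiable_steinPath t).fun_pow _).smul_const _).fun_const_smul _
  exists_bound f ε := by
    refine ⟨∑ A, ‖walsh A ε‖ * ‖coeff f A‖, fun z hz ↦ ?_⟩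
    rw [fourierMultiplier_apply]
    refine norm_sum_le_of_le _ fun A _ ↦ ?_
    rw [norm_smul, norm_smul, noise, norm_pow]
    gcongr
    exact mul_le_of_le_one_left (norm_nonneg _)
      (pow_le_one₀ (norm_nonneg _) ((norm_steinPath_le t hz).trans ht))
  le_left z hz := by
    have hle := (norm_steinPath_le t (z := z) ⟨hz.ge, hz.trans_le zero_le_one⟩).trans ht
    rw [steinPath_of_re_eq_zero t hz] at hle ⊢
    rw [Complex.norm_real] at hle
    exact (IsMultiplierBound.noise_ofReal hp₀.le (abs_le.1 hle)).le
  le_right z hz := (h z hz).le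

theorem KConvex.exists_isMultiplierBound_noise (hX : KConvex X) (hp : 1 < p) :
    ∃ r > 0, ∀ n, ∀ ρ ∈ rhombus r, IsMultiplierBound X p (noise (n := n) ρ) 2 := by
  obtain ⟨q, hq, K, hK⟩ := hX.exists_isMultiplierBound_level_one
  obtain ⟨θ, hθ, p₀, hp₀, hpθ⟩ := exists_interpolation_exponent hp q
  set L := max (3 * K) 1
  set c := θ * Real.exp (θ ^ 2) with hc
  have hc0 : 0 < c := mul_pos hθ.1 (Real.exp_pos _)
  have hL0 : 0 < L := lt_max_of_lt_right one_pos
  have hlevel (n k : ℕ) : IsMultiplierBound X q (level (n := n) k) (L ^ k) :=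
    ((hK n).level_of_level_one hq.le k).mono
      (pow_le_pow_left₀ (mul_nonneg zero_le_three (hK n).nonneg) (le_max_left _ _) k)
  refine ⟨c / (12 * L), by positivity, fun n ρ hρ ↦
    .noise_of_mem_rhombus hp.le (by positivity) (fun s hs ↦ ?_) hρ⟩
  have ht : 6 * |s / c| * L ≤ 1 / 2 := by
    rw [le_div_iff₀ (by positivity)] at hs
    rw [abs_div, abs_of_pos hc0, mul_div_assoc', div_mul_eq_mul_div, div_le_iff₀ hc0]
    linarith
  have ht' : 6 * |s / c| ≤ 1 :=
    (le_mul_of_one_le_right (by positivity) (le_max_right _ _)).trans (ht.trans (by norm_num))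
  have hright (z : ℂ) (hz : z.re = 1) :
      IsMultiplierBound X q (noise (n := n) (steinPath (s / c) z)) 2 :=
    .noise_of_level hq.le (hlevel n) <| (mul_le_mul_of_nonneg_right
      (norm_steinPath_le _ ⟨zero_le_one.trans_eq hz.symm, hz.le⟩) hL0.le).trans ht
  have hstein := isSteinFamily_noise_steinPath hp₀ hq ht' hright
  refine ⟨zero_le_two, fun f ↦ (le_of_eq ?_).trans <|
    (hstein.ellNorm_le ⟨hθ.1.le, hθ.2.le⟩ hpθ f).trans <|
      mul_le_mul_of_nonneg_right ?_ (ellNorm_nonneg f)⟩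
  · rw [steinPath_ofReal, ← hc, div_mul_cancel₀ s hc0.ne']
  · rw [Real.one_rpow, one_mul]
    simpa using Real.rpow_le_rpow_of_exponent_le one_le_two hθ.2.le

end ImaginaryNoise

section DegreeGrowth

variable {n d : ℕ} {p r K : ℝ}

lemma fourierMultiplier_noise_of_degLE {f : (Fin n → Bool) → X} (hf : degLE f d) (ρ : ℂ) :
    fourierMultiplier n X (noise ρ) f =
      ∑ k ∈ Finset.range (d + 1), ρ ^ k • fourierMultiplier n X (level k) f := by
  ext ε
  simp only [Finset.sum_apply, Pi.smul_apply, fourierMultiplier_apply, Finset.smul_sum]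
  rw [Finset.sum_comm]
  refine Finset.sum_congr rfl fun A _ ↦ ?_
  rcases le_or_gt A.card d with hA | hA
  · rw [← sum_pow_mul_level (Nat.lt_succ_of_le hA), Finset.sum_smul, Finset.smul_sum]
    exact Finset.sum_congr rfl fun k _ ↦ by rw [mul_smul, smul_comm (walsh A ε)]
  · simp [hf A hA]

lemma ellNorm_fourierMultiplier_noise_of_degLE (hp : 0 < p) {f : (Fin n → Bool) → X}
    (hf : degLE f d) (ρ : ℂ) :
    ellNorm p (fourierMultiplier n X (noise ρ) f) = ‖∑ k ∈ Finset.range (d + 1),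
      ρ ^ k • WithLp.toLp (ENNReal.ofReal p) (fourierMultiplier n X (level k) f)‖ := by
  rw [ellNorm_eq_norm_toLp hp, fourierMultiplier_noise_of_degLE hf]
  simp only [WithLp.toLp_sum, WithLp.toLp_smul]

lemma norm_coeff_one_le_of_forall_norm_eq {E : Type*} [NormedAddCommGroup E] [NormedSpace ℂ E]
    {a : ℕ → E} {s M : ℝ} (hd : 1 ≤ d) (hs : 0 < s)
    (h : ∀ z : ℂ, ‖z‖ = s → ‖∑ k ∈ Finset.range (d + 1), z ^ k • a k‖ ≤ M) : ‖a 1‖ ≤ M / s := by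
  have hderiv : deriv (fun z : ℂ ↦ ∑ k ∈ Finset.range (d + 1), z ^ k • a k) 0 = a 1 := by
    have hsum := HasDerivAt.fun_sum (u := Finset.range (d + 1)) fun k _ ↦
      (hasDerivAt_pow k (0 : ℂ)).smul_const (a k)
    rw [hsum.deriv, Finset.sum_eq_single_of_mem 1 (Finset.mem_range.2 (Nat.lt_succ_of_le hd))]
    · simp
    · intro k _ hk
      rcases k with _ | _ | k <;> simp_all
  rw [← hderiv]
  refine Complex.norm_deriv_le_of_forall_mem_sphere_norm_le hs
    (Differentiable.diffContOnCl (by fun_prop)) fun z hz ↦ h z (by simpa using hz)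

namespace IsMultiplierBound

lemma level_one_of_rhombus (hp : 1 ≤ p) (hr : 0 < r)
    (h : ∀ ρ ∈ rhombus r, IsMultiplierBound X p (noise (n := n) ρ) K) :
    IsMultiplierBound X p (level (n := n) 1) (K * (1 + r) / r) where
  nonneg := by
    have hK : 0 ≤ K := (h 0 (by simp [rhombus])).nonneg
    positivity
  le f := by
    have hp' := zero_lt_one.trans_le hp
    have : Fact (1 ≤ ENNReal.ofReal p) := ⟨ENNReal.one_le_ofReal.2 hp⟩
    have hdeg : degLE f (n + 1) := fun A hA ↦
      absurd (card_finset_fin_le A) (by omega)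
    have hcircle (z : ℂ) (hz : ‖z‖ = r / (1 + r)) : z ∈ rhombus r := by
      calc |z.re| + |z.im| / r ≤ ‖z‖ + ‖z‖ / r :=
            add_le_add (Complex.abs_re_le_norm z)
              (div_le_div_of_nonneg_right (Complex.abs_im_le_norm z) hr.le)
        _ = 1 := by rw [hz]; field_simp; ring
    have hcauchy := norm_coeff_one_le_of_forall_norm_eq (Nat.le_add_left 1 n)
      (a := fun k ↦ WithLp.toLp (ENNReal.ofReal p) (fourierMultiplier n X (level k) f))
      (by positivity) fun z hz ↦ (ellNorm_fourierMultiplier_noise_of_degLE hp' hdeg z).symm.le.trans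
        ((h z (hcircle z hz)).le f)
    rw [ellNorm_eq_norm_toLp hp']
    convert hcauchy using 1
    field_simp

lemma exists_growth (hp : 1 ≤ p) (hr : 0 < r)
    (h : ∀ ρ ∈ rhombus r, IsMultiplierBound X p (noise (n := n) ρ) K) (hd : 1 ≤ d) :
    ∃ z : ℝ, 1 < z ∧ (z - 1)⁻¹ ≤ 2 * (d : ℝ) ^ rhombusExponent r ∧ ∀ f : (Fin n → Bool) → X,
      degLE f d → lpNorm p (fourierMultiplier n X (noise z) f) ≤ 9 * (K * lpNorm p f) := by
  have hp' := zero_lt_one.trans_le hp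
  have : Fact (1 ≤ ENNReal.ofReal p) := ⟨ENNReal.one_le_ofReal.2 hp⟩
  obtain ⟨z, hz, hzd, hgrowth⟩ := exists_norm_sum_smul_le_of_rhombus
    (PiLp (ENNReal.ofReal p) fun _ : Fin n → Bool ↦ X) hr hd
  refine ⟨z, hz, hzd, fun f hf ↦ ?_⟩
  have hell : ellNorm p (fourierMultiplier n X (noise z) f) ≤ 9 * (K * ellNorm p f) := by
    rw [ellNorm_fourierMultiplier_noise_of_degLE hp' hf]
    refine hgrowth _ _ fun ρ hρ ↦ ?_
    rw [← ellNorm_fourierMultiplier_noise_of_degLE hp' hf]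
    exact (h ρ hρ).le f
  rw [lpNorm_eq_mul_ellNorm, lpNorm_eq_mul_ellNorm]
  grw [hell]
  exact le_of_eq (by ring)

end IsMultiplierBound

end DegreeGrowth

section Gradient

variable {n d : ℕ} {p l z K : ℝ}

/-- The multiplier of the directional derivative `∑ i, δ i ∂_i`. -/
def signSum (δ : Fin n → Bool) (A : Finset (Fin n)) : ℂ := ∑ i ∈ A, (sgn (δ i) : ℂ)

lemma sgn_beq (a b : Bool) : sgn (a == b) = sgn a * sgn b := by
  cases a <;> cases b <;> norm_num [sgn]

lemma walsh_update_not (A : Finset (Fin n)) (ε : Fin n → Bool) (i : Fin n) :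
    walsh A (Function.update ε i (!ε i)) = if i ∈ A then -walsh A ε else walsh A ε := by
  split_ifs with hi
  · have herase : ∏ j ∈ A.erase i, sgn (Function.update ε i (!ε i) j) =
        ∏ j ∈ A.erase i, sgn (ε j) :=
      Finset.prod_congr rfl fun j hj ↦ by rw [Function.update_of_ne (Finset.ne_of_mem_erase hj)]
    rw [walsh, walsh, ← Finset.mul_prod_erase A _ hi, ← Finset.mul_prod_erase A _ hi, herase,
      Function.update_self, ← neg_mul]
    cases ε i <;> simp [sgn]
  · exact Finset.prod_congr rfl fun j hj ↦ by
      rw [Function.update_of_ne (ne_of_mem_of_not_mem hj hi)]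

lemma pderiv_eq_fourierMultiplier (i : Fin n) (f : (Fin n → Bool) → X) :
    pderiv i f = fourierMultiplier n X (fun A ↦ if i ∈ A then 1 else 0) f := by
  ext ε
  rw [pderiv, ← sum_walsh_smul_coeff f ε, ← sum_walsh_smul_coeff f (Function.update ε i _),
    fourierMultiplier_apply, ← Finset.sum_sub_distrib, Finset.smul_sum]
  refine Finset.sum_congr rfl fun A _ ↦ ?_
  rw [walsh_update_not]
  split_ifs
  · rw [← sub_smul, smul_smul, one_smul]
    ring_nf
  · simp

lemma sum_sgn_smul_pderiv (δ : Fin n → Bool) (f : (Fin n → Bool) → X) :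
    (fun ε ↦ ∑ i, sgn (δ i) • pderiv i f ε) = fourierMultiplier n X (signSum δ) f := by
  have hsum : signSum δ = ∑ i, (sgn (δ i) : ℂ) • fun A ↦ if i ∈ A then (1 : ℂ) else 0 := by
    ext A
    simp [signSum]
  ext ε
  rw [hsum, map_sum, LinearMap.sum_apply, Finset.sum_apply]
  refine Finset.sum_congr rfl fun i _ ↦ ?_
  rw [map_smul, LinearMap.smul_apply, Pi.smul_apply, ← pderiv_eq_fourierMultiplier,
    Complex.coe_smul]

lemma beq_beq_cancel (a b : Bool) : ((a == b) == b) = a := by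
  cases a <;> cases b <;> rfl

/-- The bijection of pairs of points of the cube which maps `(ε, δ)` to `(δ ε, ε)`, the product
being taken coordinatewise. -/
def twistFst : Equiv.Perm ((Fin n → Bool) × (Fin n → Bool)) where
  toFun x := (fun i ↦ x.2 i == x.1 i, x.1)
  invFun y := (y.2, fun i ↦ y.1 i == y.2 i)
  left_inv _ := Prod.ext rfl (funext fun _ ↦ beq_beq_cancel _ _)
  right_inv _ := Prod.ext (funext fun _ ↦ beq_beq_cancel _ _) rfl

lemma ellNorm_uncurry_comp_beq {E : Type*} [NormedAddCommGroup E]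
    (g : (Fin n → Bool) → (Fin n → Bool) → E) :
    ellNorm p (Function.uncurry fun ε (δ : Fin n → Bool) ↦ g (fun i ↦ δ i == ε i) ε) =
      ellNorm p (Function.uncurry g) :=
  ellNorm_comp_equiv twistFst (Function.uncurry g)

lemma walsh_piecewise_of_inter_eq_singleton {A B : Finset (Fin n)} {i : Fin n} (h : A ∩ B = {i})
    (δ ε : Fin n → Bool) : walsh A (B.piecewise δ ε) = sgn (δ i == ε i) * walsh A ε := by
  have hdiff : walsh A ε = sgn (ε i) * walsh (A \ B) ε := by
    simpa [h, walsh, Finset.piecewise_same] using walsh_piecewise A B ε ε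
  rw [walsh_piecewise, h, hdiff, sgn_beq, ← mul_assoc, mul_assoc (sgn (δ i)), sgn_mul_self,
    mul_one, walsh, Finset.prod_singleton]

lemma sum_bernoulliWeight_mul_walsh_piecewise (l : ℝ) (A : Finset (Fin n)) (δ ε : Fin n → Bool) :
    ∑ B, (bernoulliWeight l B : ℂ) * (level 1 (A ∩ B) * walsh A (B.piecewise δ ε)) =
      l * (1 - l) ^ (A.card - 1) * (signSum (fun i ↦ δ i == ε i) A * walsh A ε) := by
  have hterm (B : Finset (Fin n)) : level 1 (A ∩ B) * walsh A (B.piecewise δ ε) =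
      ∑ i ∈ A, (if A ∩ B = {i} then 1 else 0) * (sgn (δ i == ε i) * walsh A ε : ℂ) := by
    rw [level_one_eq_sum, Finset.sum_mul]
    refine Finset.sum_congr rfl fun i _ ↦ ?_
    split_ifs with h
    · rw [walsh_piecewise_of_inter_eq_singleton h, Complex.ofReal_mul]
    · simp
  simp only [hterm, Finset.mul_sum, ← mul_assoc]
  rw [Finset.sum_comm, signSum, Finset.mul_sum, Finset.sum_mul]
  refine Finset.sum_congr rfl fun i hi ↦ ?_
  rw [← Finset.sum_mul, ← Finset.sum_mul, sum_bernoulliWeight_inter_eq_singleton l hi]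

lemma fourierMultiplier_signSum_beq (hz : 1 < z) (f : (Fin n → Bool) → X) (δ ε : Fin n → Bool) :
    fourierMultiplier n X (signSum fun i ↦ δ i == ε i) f ε = ((z - 1)⁻¹ : ℂ) •
      ∑ B, (bernoulliWeight (1 - z⁻¹) B : ℂ) • fourierMultiplier n X (fun A ↦ level 1 (A ∩ B))
        (fourierMultiplier n X (noise z) f) (B.piecewise δ ε) := by
  have hz₀ : (z : ℂ) ≠ 0 := mod_cast (zero_lt_one.trans hz).ne'
  have hz₁ : (z : ℂ) - 1 ≠ 0 := sub_ne_zero.2 (mod_cast hz.ne')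
  have hsymbol (A : Finset (Fin n)) : signSum (fun i ↦ δ i == ε i) A * walsh A ε =
      ((z - 1)⁻¹ : ℂ) * ((∑ B, (bernoulliWeight (1 - z⁻¹) B : ℂ) *
        (level 1 (A ∩ B) * walsh A (B.piecewise δ ε))) * noise z A) := by
    rw [sum_bernoulliWeight_mul_walsh_piecewise]
    rcases A.eq_empty_or_nonempty with rfl | hA
    · simp [signSum]
    · obtain ⟨k, hk⟩ := Nat.exists_eq_succ_of_ne_zero hA.card_ne_zero
      rw [noise, hk, Nat.succ_sub_one, Complex.ofReal_sub, Complex.ofReal_inv, Complex.ofReal_one,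
        sub_sub_cancel, inv_pow, pow_succ]
      field_simp
  have happly (m : Finset (Fin n) → ℂ) (g : (Fin n → Bool) → X) (ω : Fin n → Bool) :
      fourierMultiplier n X m g ω = ∑ A, (m A * walsh A ω) • coeff g A := by
    rw [fourierMultiplier_apply]
    exact Finset.sum_congr rfl fun A _ ↦ by rw [mul_comm, mul_smul, Complex.coe_smul]
  simp only [← Module.End.mul_apply, ← map_mul]
  simp only [happly, hsymbol, Finset.smul_sum, Pi.mul_apply, Finset.sum_mul,
    Finset.mul_sum, Finset.sum_smul, smul_smul]
  rw [Finset.sum_comm]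
  refine Finset.sum_congr rfl fun B _ ↦ Finset.sum_congr rfl fun A _ ↦ ?_
  ring_nf

lemma ellNorm_fourierMultiplier_signSum_le (hp : 1 ≤ p) (hz : 1 < z)
    (h : IsMultiplierBound X p (level (n := n) 1) K) (f : (Fin n → Bool) → X) :
    ellNorm p (Function.uncurry fun δ ↦ fourierMultiplier n X (signSum δ) f) ≤
      (z - 1)⁻¹ * ((2 ^ n : ℝ) ^ (1 / p) *
        (K * ellNorm p (fourierMultiplier n X (noise z) f))) := by
  have hl : 1 - z⁻¹ ∈ Set.Icc (0 : ℝ) 1 :=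
    ⟨sub_nonneg.2 (inv_le_one_of_one_le₀ hz.le), sub_le_self _ (by positivity)⟩
  have hdecomp : (Function.uncurry fun ε (δ : Fin n → Bool) ↦
        fourierMultiplier n X (signSum fun i ↦ δ i == ε i) f ε) =
      ((z - 1)⁻¹ : ℂ) • ∑ B, (bernoulliWeight (1 - z⁻¹) B : ℂ) • Function.uncurry fun ε δ ↦
        fourierMultiplier n X (fun A ↦ level 1 (A ∩ B))
          (fourierMultiplier n X (noise z) f) (B.piecewise δ ε) := by
    ext ⟨ε, δ⟩
    simp only [Function.uncurry_apply_pair, fourierMultiplier_signSum_beq hz, Pi.smul_apply,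
      Finset.sum_apply]
  have hnorm : ‖((z - 1)⁻¹ : ℂ)‖ = (z - 1)⁻¹ := by
    rw [← Complex.ofReal_one, ← Complex.ofReal_sub, ← Complex.ofReal_inv, Complex.norm_real,
      Real.norm_of_nonneg (inv_nonneg.2 (sub_nonneg.2 hz.le))]
  rw [← ellNorm_uncurry_comp_beq, hdecomp, ellNorm_smul hp, hnorm]
  refine mul_le_mul_of_nonneg_left
    (ellNorm_sum_bernoulliWeight_smul_le hp hl fun B ↦ ?_) (inv_nonneg.2 (sub_nonneg.2 hz.le))
  rw [ellNorm_comp_piecewise]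
  gcongr
  exact (h.comp_inter (zero_lt_one.trans_le hp) B).le _

lemma mean_lpNorm_rpow {Y : Type*} [NormedAddCommGroup Y] (hp : 0 < p)
    (g : (Fin n → Bool) → (Fin n → Bool) → Y) :
    ((2 ^ n : ℝ)⁻¹ * ∑ δ, lpNorm p (g δ) ^ p) ^ (1 / p) =
      ((2 ^ n : ℝ)⁻¹) ^ (1 / p) * (((2 ^ n : ℝ)⁻¹) ^ (1 / p) * ellNorm p (Function.uncurry g)) := by
  have hinner (δ : Fin n → Bool) : lpNorm p (g δ) ^ p = (2 ^ n : ℝ)⁻¹ * ∑ ε, ‖g δ ε‖ ^ p := by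
    rw [lpNorm_eq_mul_ellNorm, Real.mul_rpow (by positivity) (ellNorm_nonneg _), ellNorm_rpow hp,
      ← Real.rpow_mul (by positivity), one_div_mul_cancel hp.ne', Real.rpow_one]
  simp only [hinner, ← Finset.mul_sum, ellNorm, Fintype.sum_prod_type, Function.uncurry_apply_pair]
  rw [Real.mul_rpow (by positivity) (by positivity), Real.mul_rpow (by positivity) (by positivity)]

lemma mean_lpNorm_sum_sgn_smul_pderiv_le (hp : 1 ≤ p) (hz : 1 < z)
    (h : IsMultiplierBound X p (level (n := n) 1) K) (f : (Fin n → Bool) → X) :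
    ((2 ^ n : ℝ)⁻¹ * ∑ δ : Fin n → Bool,
        lpNorm p (fun ε ↦ ∑ i, sgn (δ i) • pderiv i f ε) ^ p) ^ (1 / p) ≤
      (z - 1)⁻¹ * (K * lpNorm p (fourierMultiplier n X (noise z) f)) := by
  have hcancel : ((2 ^ n : ℝ)⁻¹) ^ (1 / p) * (2 ^ n : ℝ) ^ (1 / p) = 1 := by
    rw [← Real.mul_rpow (by positivity) (by positivity), inv_mul_cancel₀ (by positivity),
      Real.one_rpow]
  simp only [sum_sgn_smul_pderiv]
  rw [mean_lpNorm_rpow (zero_lt_one.trans_le hp), lpNorm_eq_mul_ellNorm]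
  grw [ellNorm_fourierMultiplier_signSum_le hp hz h f]
  refine le_of_eq ?_
  linear_combination (z - 1)⁻¹ * K * ((2 ^ n : ℝ)⁻¹) ^ (1 / p) *
    ellNorm p (fourierMultiplier n X (noise z) f) * hcancel

end Gradient

theorem stmt8_general (hX : KConvex X) {p : ℝ} (hp : 1 < p) :
    ∃ α : ℝ, 1 ≤ α ∧ α < 2 ∧ ∃ C : ℝ, 0 < C ∧
      ∀ n d : ℕ, 1 ≤ d → ∀ f : (Fin n → Bool) → X, degLE f d →
        ((2 ^ n : ℝ)⁻¹ * ∑ δ : Fin n → Bool,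
            (lpNorm p (fun ε ↦ ∑ i : Fin n, sgn (δ i) • pderiv i f ε)) ^ p) ^ (1 / p) ≤
          C * (d : ℝ) ^ α * lpNorm p f := by
  obtain ⟨r, hr, hnoise⟩ := hX.exists_isMultiplierBound_noise hp
  refine ⟨rhombusExponent r, one_le_rhombusExponent r, rhombusExponent_lt_two hr,
    2 * (2 * (1 + r) / r * (9 * 2)), by positivity, fun n d hd f hf ↦ ?_⟩
  obtain ⟨z, hz, hzd, hgrowth⟩ := IsMultiplierBound.exists_growth hp.le hr (hnoise n) hd
  have hlevel := IsMultiplierBound.level_one_of_rhombus hp.le hr (hnoise n)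
  calc _ ≤ (z - 1)⁻¹ * (2 * (1 + r) / r * lpNorm p (fourierMultiplier n X (noise z) f)) :=
        mean_lpNorm_sum_sgn_smul_pderiv_le hp.le hz hlevel f
    _ ≤ 2 * (d : ℝ) ^ rhombusExponent r * (2 * (1 + r) / r * (9 * (2 * lpNorm p f))) := by
        have := lpNorm_nonneg (p := p) f
        have := lpNorm_nonneg (p := p) (fourierMultiplier n X (noise z) f)
        gcongr
        exact hgrowth f hf
    _ = _ := by ring

/-- **Bernstein–Markov inequality for the vector-valued gradient** on `K`-convex spaces. -/
theorem stmt8 {X : Type*} [NormedAddCommGroup X] [NormedSpace ℂ X] [CompleteSpace X]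
    (hX : KConvex X) (p : ℝ) (hp : 1 < p) :
    ∃ α : ℝ, 1 ≤ α ∧ α < 2 ∧ ∃ C : ℝ, 0 < C ∧
      ∀ n d : ℕ, 1 ≤ d → d ≤ n → ∀ f : (Fin n → Bool) → X, degLE f d →
        ((2 ^ n : ℝ)⁻¹ * ∑ δ : Fin n → Bool,
            (lpNorm p (fun ε => ∑ i : Fin n, sgn (δ i) • pderiv i f ε)) ^ p) ^ (1 / p) ≤
          C * (d : ℝ) ^ α * (Real.log d + 1) * lpNorm p f := by
  obtain ⟨α, hα₁, hα₂, C, hC, hbound⟩ := stmt8_general hX hp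
  refine ⟨α, hα₁, hα₂, C, hC, fun n d hd _ f hf ↦ (hbound n d hd f hf).trans ?_⟩
  exact mul_le_mul_of_nonneg_right (le_mul_of_one_le_right (by positivity)
    (le_add_of_nonneg_left (Real.log_natCast_nonneg d))) (lpNorm_nonneg f)

end HammingCube
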